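/- arXiv:2307.10964 — 3 statements merged into one kernel-verified Lean document; each statement's English description precedes it below -/
import Mathlib

section
/- Let G be a countable group acting by graph automorphisms on a countable tree T, and suppose that every infinite geodesic 𝐯 in T has a finite initial segment σ with Stab_G(σ) = Stab_G(𝐯). Then the orbit equivalence relation E_G^{∂T} of the induced action of G on the Gromov boundary ∂T is Borel hyperfinite. -/
open MeasureTheory Function Filter

/-! ### Countable Borel equivalence relations -/

section CBER

variable {X Y : Type*} [MeasurableSpace X] [MeasurableSpace Y]

/-- A countable Borel equivalence relation on a standard Borel space. -/
def IsCBER (E : X → X → Prop) : Prop :=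
  Equivalence E ∧ MeasurableSet {p : X × X | E p.1 p.2} ∧ ∀ x : X, {y | E x y}.Countable

/-- `B` meets every `E`-class in exactly one point. -/
def IsTransversal (E : X → X → Prop) (B : Set X) : Prop :=
  ∀ x : X, ∃! y : X, y ∈ B ∧ E x y

/-- A CBER is smooth if it admits a Borel transversal. -/
def SmoothRel (E : X → X → Prop) : Prop :=
  ∃ B : Set X, MeasurableSet B ∧ IsTransversal E B

/-- A Borel equivalence relation all of whose classes are finite. -/
def IsFiniteBorelEquivalence (E : X → X → Prop) : Prop :=
  Equivalence E ∧ MeasurableSet {p : X × X | E p.1 p.2} ∧ ∀ x : X, {y | E x y}.Finite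

/-- A CBER is (Borel) hyperfinite if it is the increasing union of a sequence of
Borel equivalence relations with finite classes. -/
def Hyperfinite (E : X → X → Prop) : Prop :=
  ∃ F : ℕ → X → X → Prop,
    (∀ i, IsFiniteBorelEquivalence (F i)) ∧
    (∀ i x y, F i x y → F (i + 1) x y) ∧
    (∀ x y, E x y ↔ ∃ i, F i x y)

/-- Borel reducibility of equivalence relations. -/
def BorelReducible (E : X → X → Prop) (F : Y → Y → Prop) : Prop :=
  ∃ f : X → Y, Measurable f ∧ ∀ x x' : X, E x x' ↔ F (f x) (f x')

/-- Borel bireducibility of equivalence relations. -/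
def BorelBireducible (E : X → X → Prop) (F : Y → Y → Prop) : Prop :=
  BorelReducible E F ∧ BorelReducible F E

/-- The saturation `[A]_E` of a set `A`: the smallest `E`-invariant set containing `A`. -/
def Saturation (E : X → X → Prop) (A : Set X) : Set X :=
  {x : X | ∃ a ∈ A, E x a}

end CBER

/-! ### ℓ¹ machinery, amenability of CBERs -/

section Amen

variable {X : Type*} [MeasurableSpace X]

/-- ℓ¹ distance between two summable functions. -/
noncomputable def l1dist {A : Type*} (p q : A → ℝ) : ℝ :=
  ∑' a : A, |p a - q a|

/-- `p` is a probability measure concentrated on the `E`-class of `x`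
(identified with its density). -/
def IsProbOnClass (E : X → X → Prop) (p : X → ℝ) (x : X) : Prop :=
  (∀ y, 0 ≤ p y) ∧ (∀ y, p y ≠ 0 → E x y) ∧ HasSum p 1

/-- A CBER is Borel amenable if there is a sequence of Borel assignments of probability
measures on the classes which are asymptotically invariant. -/
def BorelAmenable (E : X → X → Prop) : Prop :=
  ∃ p : ℕ → X → X → ℝ,
    (∀ i x, IsProbOnClass E (p i x) x) ∧
    (∀ i, Measurable fun q : X × X => p i q.1 q.2) ∧
    (∀ x y, E x y → ∀ ε : ℝ, 0 < ε → ∀ᶠ i in atTop, l1dist (p i x) (p i y) < ε)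

/-- A CBER is Borel 2-amenable if there is a double sequence of Borel assignments of
probability measures on the classes which are asymptotically invariant in the
iterated-limit sense. -/
def Borel2Amenable (E : X → X → Prop) : Prop :=
  ∃ p : ℕ → ℕ → X → X → ℝ,
    (∀ i j x, IsProbOnClass E (p i j x) x) ∧
    (∀ i j, Measurable fun q : X × X => p i j q.1 q.2) ∧
    (∀ x y, E x y → ∀ ε : ℝ, 0 < ε →
      ∀ᶠ i in atTop, ∀ᶠ j in atTop, l1dist (p i j x) (p i j y) < ε)

/-- `E` is μ-hyperfinite: hyperfinite off a μ-null set. -/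
def MuHyperfinite (E : X → X → Prop) (μ : Measure X) : Prop :=
  ∃ A : Set X, MeasurableSet A ∧ μ Aᶜ = 0 ∧ Hyperfinite (fun a b : A => E a b)

/-- `E` is μ-amenable: Borel amenable off a μ-null set. -/
def MuAmenable (E : X → X → Prop) (μ : Measure X) : Prop :=
  ∃ A : Set X, MeasurableSet A ∧ μ Aᶜ = 0 ∧ BorelAmenable (fun a b : A => E a b)

/-- `E` is μ-2-amenable: Borel 2-amenable off a μ-null set. -/
def Mu2Amenable (E : X → X → Prop) (μ : Measure X) : Prop :=
  ∃ A : Set X, MeasurableSet A ∧ μ Aᶜ = 0 ∧ Borel2Amenable (fun a b : A => E a b)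

/-- `E` is measure-hyperfinite: μ-hyperfinite for every Borel probability measure μ. -/
def MeasureHyperfinite (E : X → X → Prop) : Prop :=
  ∀ μ : Measure X, IsProbabilityMeasure μ → MuHyperfinite E μ

end Amen

/-! ### Reiter functions and uniform coamenability -/

section Reiter

/-- A (finitely or infinitely supported) probability function on a countable set. -/
def IsProbFun {A : Type*} (p : A → ℝ) : Prop :=
  (∀ a, 0 ≤ p a) ∧ HasSum p 1

/-- The pushforward of `p : Prob(G)` under the orbit map `g ↦ g • x`. -/
noncomputable def pushMeasure {G X : Type*} [Group G] [MulAction G X]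
    (p : G → ℝ) (x : X) : X → ℝ :=
  fun y => ∑' g : {g : G // g • x = y}, p g.1

/-- `p` is an `(S, ε)`-Reiter function for the action `G ↷ X`. -/
def IsReiterFun {G : Type*} (X : Type*) [Group G] [MulAction G X]
    (S : Finset G) (ε : ℝ) (p : G → ℝ) : Prop :=
  IsProbFun p ∧ ∀ s ∈ S, ∀ x : X, l1dist (pushMeasure p x) (pushMeasure p (s • x)) < ε

/-- A subgroup `H ≤ G` is uniformly coamenable if the action `G ↷ G/H` admits
`(S, ε)`-Reiter functions for all finite `S ⊆ G` and all `ε > 0`. -/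
def UniformlyCoamenable {G : Type*} [Group G] (H : Subgroup G) : Prop :=
  ∀ (S : Finset G) (ε : ℝ), 0 < ε → ∃ p : G → ℝ, IsReiterFun (G ⧸ H) S ε p

/-- The Reiter criterion for amenability of a countable group `Q`. -/
def ReiterAmenable (Q : Type*) [Group Q] : Prop :=
  ∀ (S : Finset Q) (ε : ℝ), 0 < ε → ∃ q : Q → ℝ, IsProbFun q ∧
    ∀ s ∈ S, l1dist q (fun x => q (s⁻¹ * x)) < ε

end Reiter

/-! ### Trees, geodesics and the Gromov boundary -/

section Tree

variable {V : Type*} (T : SimpleGraph V)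

/-- The space of infinite geodesics in the graph `T`. -/
def Geo : Set (ℕ → V) :=
  {v | Function.Injective v ∧ ∀ n, T.Adj (v n) (v (n + 1))}

/-- The shift map (the action of the generator of the monoid ℕ) on `Geo T`. -/
def geoShift (v : Geo T) : Geo T :=
  ⟨fun n => v.1 (n + 1),
   fun a b h => by have := v.2.1 h; omega,
   fun n => v.2.2 (n + 1)⟩

/-- Tail equivalence: the orbit equivalence relation of the shift action of the
monoid ℕ on `Geo T`, i.e. the equivalence relation generated by `v ∼ m • v`. -/
def tailRel : Geo T → Geo T → Prop :=
  Relation.EqvGen fun a b => ∃ m : ℕ, b = (geoShift T)^[m] a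

def tailSetoid : Setoid (Geo T) :=
  ⟨tailRel T, Relation.EqvGen.is_equivalence _⟩

/-- The Gromov boundary `∂T = Geo(T)/ℕ`. -/
def Bdry : Type _ := Quotient (tailSetoid T)

instance [MeasurableSpace V] : MeasurableSpace (Bdry T) :=
  inferInstanceAs (MeasurableSpace (Quotient (tailSetoid T)))

variable {G : Type*} [Group G] [MulAction G V]

/-- The action `G ↷ V` is by graph automorphisms of `T`. -/
def IsGraphAction (G : Type*) [Group G] [MulAction G V] : Prop :=
  ∀ (g : G) (v w : V), T.Adj v w ↔ T.Adj (g • v) (g • w)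

variable {T}

/-- The coordinatewise action of `G` on `Geo T`. -/
def geoSmul (h : IsGraphAction T G) (g : G) (v : Geo T) : Geo T :=
  ⟨fun n => g • v.1 n, (MulAction.injective g).comp v.2.1,
   fun n => (h g _ _).mp (v.2.2 n)⟩

lemma geoShift_geoSmul (h : IsGraphAction T G) (g : G) (v : Geo T) :
    geoShift T (geoSmul h g v) = geoSmul h g (geoShift T v) := rfl

lemma iterate_geoShift_geoSmul (h : IsGraphAction T G) (g : G) (m : ℕ) (v : Geo T) :
    (geoShift T)^[m] (geoSmul h g v) = geoSmul h g ((geoShift T)^[m] v) := by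
  induction m generalizing v with
  | zero => rfl
  | succ m ih =>
      rw [Function.iterate_succ_apply, Function.iterate_succ_apply,
        geoShift_geoSmul, ih]

lemma tailRel_geoSmul (h : IsGraphAction T G) (g : G) {v w : Geo T}
    (hvw : tailRel T v w) : tailRel T (geoSmul h g v) (geoSmul h g w) := by
  induction hvw with
  | rel a b hab =>
      obtain ⟨m, rfl⟩ := hab
      exact Relation.EqvGen.rel _ _ ⟨m, (iterate_geoShift_geoSmul h g m a).symm⟩
  | refl a => exact Relation.EqvGen.refl _
  | symm a b _ ih => exact Relation.EqvGen.symm _ _ ih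
  | trans a b c _ _ ih1 ih2 => exact Relation.EqvGen.trans _ _ _ ih1 ih2

/-- The induced action of `G` on the Gromov boundary `∂T`. -/
def bdrySmul (h : IsGraphAction T G) (g : G) : Bdry T → Bdry T :=
  Quotient.map (geoSmul h g) (fun _ _ hab => tailRel_geoSmul h g hab)

/-- The orbit equivalence relation `E_G^{∂T}` of the boundary action. -/
def bdryRel (h : IsGraphAction T G) : Bdry T → Bdry T → Prop :=
  fun x y => ∃ g : G, bdrySmul h g x = y

/-- The orbit equivalence relation `E_G^{Geo(T)}`. -/
def geoRel (h : IsGraphAction T G) : Geo T → Geo T → Prop :=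
  fun v w => ∃ g : G, geoSmul h g v = w

end Tree

/-! ### Stabilizers of geodesics and of their initial segments -/

section Stab

variable (G : Type*) {V : Type*} [Group G] [MulAction G V]

/-- The (pointwise) stabilizer of an infinite sequence of vertices. -/
def ptwiseStab (v : ℕ → V) : Subgroup G where
  carrier := {g : G | ∀ k : ℕ, g • v k = v k}
  one_mem' := fun k => one_smul _ _
  mul_mem' := fun {a b} ha hb k => by rw [mul_smul, hb k, ha k]
  inv_mem' := fun {a} ha k => inv_smul_eq_iff.mpr (ha k).symm

/-- The stabilizer of the initial segment `(v 0, …, v n)`. -/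
def initStab (v : ℕ → V) (n : ℕ) : Subgroup G where
  carrier := {g : G | ∀ k ≤ n, g • v k = v k}
  one_mem' := fun k _ => one_smul _ _
  mul_mem' := fun {a b} ha hb k hk => by rw [mul_smul, hb k hk, ha k hk]
  inv_mem' := fun {a} ha k hk => inv_smul_eq_iff.mpr (ha k hk).symm

/-- The stabilizer of a finite geodesic given as a tuple of vertices. -/
def finStab {n : ℕ} (f : Fin n → V) : Subgroup G where
  carrier := {g : G | ∀ i : Fin n, g • f i = f i}
  one_mem' := fun i => one_smul _ _
  mul_mem' := fun {a b} ha hb i => by rw [mul_smul, hb i, ha i]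
  inv_mem' := fun {a} ha i => inv_smul_eq_iff.mpr (ha i).symm

end Stab

/-! ### Orbit equivalence relations of monoid actions -/

section MonoidOrbit

/-- The orbit equivalence relation of a monoid action: the equivalence relation
generated by `x ∼ m • x`. -/
def monOrbitRel (M : Type*) {X : Type*} [Monoid M] [MulAction M X] :
    X → X → Prop :=
  Relation.EqvGen fun x y => ∃ m : M, y = m • x

end MonoidOrbit

/-! ### Auxiliary results -/

section Aux

/-- Hyperfiniteness criterion. -/
lemma aux_hyperfinite {X : Type*} [MeasurableSpace X] (E : X → X → Prop) (hE : Equivalence E)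
    (hm : MeasurableSet {p : X × X | E p.1 p.2}) (c : ℕ → X → ℕ) (hc : ∀ n, Measurable (c n))
    (h1 : ∀ x y, E x y → ∀ᶠ n in atTop, c n x = c n y)
    (h2 : ∀ x y, E x y → (∀ n, c n x = c n y) → x = y) : Hyperfinite E := by
  refine ⟨fun n x y => E x y ∧ ∀ i j, n ≤ Nat.pair i j → (c i x = j ↔ c i y = j), ?_, ?_, ?_⟩
  · intro n
    refine ⟨⟨fun x => ⟨hE.refl x, fun _ _ _ => Iff.rfl⟩,
      fun h => ⟨hE.symm h.1, fun i j hij => (h.2 i j hij).symm⟩,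
      fun h h' => ⟨hE.trans h.1 h'.1, fun i j hij => (h.2 i j hij).trans (h'.2 i j hij)⟩⟩, ?_, ?_⟩
    · have : {p : X × X | E p.1 p.2 ∧ ∀ i j, n ≤ Nat.pair i j → (c i p.1 = j ↔ c i p.2 = j)} =
        {p : X × X | E p.1 p.2} ∩ ⋂ i, ⋂ j, ⋂ (_ : n ≤ Nat.pair i j),
          {p : X × X | (c i p.1 = j ↔ c i p.2 = j)} := by
        ext p; simp
      rw [this]
      refine hm.inter (MeasurableSet.iInter fun i => MeasurableSet.iInter fun j =>
        MeasurableSet.iInter fun _ => ?_)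
      have a1 : MeasurableSet {p : X × X | c i p.1 = j} :=
        ((hc i).comp measurable_fst) (measurableSet_singleton j)
      have a2 : MeasurableSet {p : X × X | c i p.2 = j} :=
        ((hc i).comp measurable_snd) (measurableSet_singleton j)
      exact a1.iff a2
    · intro x
      refine Set.Finite.of_finite_image (f := fun y =>
        {k : ℕ | k < n ∧ c k.unpair.1 y = k.unpair.2}) ?_ ?_
      · refine Set.Finite.subset (Set.finite_Iio n).powerset ?_
        rintro _ ⟨y, _, rfl⟩ k hk
        exact hk.1
      · intro y hy z hz hyz
        refine h2 _ _ (hE.trans (hE.symm hy.1) hz.1) fun i => ?_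
        by_cases hlt : n ≤ Nat.pair i (c i z)
        · exact ((hy.2 i _ hlt).symm.trans (hz.2 i _ hlt)).2 rfl
        · have : Nat.pair i (c i z) ∈ {k : ℕ | k < n ∧ c k.unpair.1 z = k.unpair.2} := by
            simp; omega
          dsimp only at hyz
          rw [← hyz] at this
          simpa using this.2
  · rintro n x y ⟨h, h'⟩
    exact ⟨h, fun i j hij => h' i j (by omega)⟩
  · intro x y
    constructor
    · intro h
      obtain ⟨N, hN⟩ := eventually_atTop.1 (h1 x y h)
      have hfin : (⋃ i ∈ Set.Iio N, ({Nat.pair i (c i x), Nat.pair i (c i y)} : Set ℕ)).Finite :=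
        (Set.finite_Iio N).biUnion fun i _ => Set.toFinite _
      obtain ⟨M, hM⟩ := hfin.bddAbove
      refine ⟨M + 1, h, fun i j hij => ?_⟩
      by_cases hi : N ≤ i
      · rw [hN i hi]
      · have e1 : Nat.pair i (c i x) ≤ M := hM (by simp; exact ⟨i, by omega, Or.inl ⟨rfl, rfl⟩⟩)
        have e2 : Nat.pair i (c i y) ≤ M := hM (by simp; exact ⟨i, by omega, Or.inr ⟨rfl, rfl⟩⟩)
        constructor
        · rintro rfl; omega
        · rintro rfl; omega
    · rintro ⟨_, h, _⟩
      exact h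

/-- Borel selectors. -/
lemma aux_selector {Y ι : Type*} [MeasurableSpace Y] [Countable ι] [Nonempty ι]
    (f : ι → Y → Y) (hf : ∀ i, Measurable (f i)) (E : Y → Y → Prop) (hE : Equivalence E)
    (hfE : ∀ v w, E v w ↔ ∃ i, f i v = w) (κ : Y → ℕ) (hκ : Measurable κ)
    (hκE : ∀ v w, E v w → κ v = κ w → v = w) :
    ∃ s : Y → Y, Measurable s ∧ (∀ v, E v (s v)) ∧ ∀ v w, E v w → s v = s w := by
  classical
  obtain ⟨e, he⟩ := exists_surjective_nat ι
  have hex : ∀ v, ∃ i : ℕ, ∀ j : ℕ, κ (f (e i) v) ≤ κ (f (e j) v) := by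
    intro v
    exact ⟨Function.argmin (fun i => κ (f (e i) v)), fun j =>
      Function.argmin_le (fun i => κ (f (e i) v)) j⟩
  have hk : Measurable fun v => Nat.find (hex v) := by
    refine measurable_find hex fun k => ?_
    simp only [Set.ofPred_forall]
    exact MeasurableSet.iInter fun j =>
      measurableSet_le (hκ.comp (hf _)) (hκ.comp (hf _))
  have hs : ∀ v, E v (f (e (Nat.find (hex v))) v) := fun v => (hfE _ _).2 ⟨_, rfl⟩
  have key : ∀ v w, E v w → κ (f (e (Nat.find (hex v))) v) ≤ κ w := by
    intro v w h
    obtain ⟨i, rfl⟩ := (hfE _ _).1 h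
    obtain ⟨j, rfl⟩ := he i
    exact Nat.find_spec (hex v) j
  refine ⟨fun v => f (e (Nat.find (hex v))) v, ?_, hs, ?_⟩
  · have : Measurable fun p : ℕ × Y => f (e p.1) p.2 :=
      measurable_from_prod_countable_right fun n => hf (e n)
    exact this.comp (hk.prodMk measurable_id)
  · intro v w h
    refine hκE _ _ (hE.trans (hE.symm (hs v)) (hE.trans h (hs w))) (le_antisymm ?_ ?_)
    · exact key _ _ (hE.trans h (hs w))
    · exact key _ _ (hE.trans (hE.symm h) (hs v))

/-- Borel markers. -/
lemma aux_marker {Y : Type*} [MeasurableSpace Y] (u : ℕ → Y → ℝ) (hu : ∀ j, Measurable (u j))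
    (C : ℝ) (hC : ∀ j y, |u j y| ≤ C) :
    ∃ k : ℕ → Y → ℕ, (∀ n, Measurable (k n)) ∧ ∀ y y' : Y, ∀ a b : ℕ,
      (∀ j, u (a + j) y = u (b + j) y') →
      ∀ᶠ n in atTop, u (k n y) y = u (k n y') y' := by
  classical
  let z : Y → ℝ := fun y => liminf (fun j => u j y) atTop
  have hz : Measurable z := Measurable.liminf hu
  let Q : Y → Prop := fun y => ∃ᶠ j in atTop, u j y = z y
  let P : ℕ → Y → ℕ → Prop := fun n y j =>
    (Q y ∧ u j y = z y) ∨ (¬ Q y ∧ u j y ≠ z y ∧ |u j y - z y| < 1 / ((n : ℝ) + 1))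
  have hex : ∀ n y, ∃ j, P n y j := by
    intro n y
    by_cases hq : Q y
    · obtain ⟨j, hj⟩ := hq.exists
      exact ⟨j, Or.inl ⟨hq, hj⟩⟩
    · have hpos : (0 : ℝ) < 1 / ((n : ℝ) + 1) := by positivity
      have hb1 : IsBoundedUnder (· ≥ ·) atTop (fun j => u j y) :=
        isBoundedUnder_of ⟨-C, fun j => (abs_le.1 (hC j y)).1⟩
      have hb2 : IsBoundedUnder (· ≤ ·) atTop (fun j => u j y) :=
        isBoundedUnder_of ⟨C, fun j => (abs_le.1 (hC j y)).2⟩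
      have f1 : ∃ᶠ j in atTop, u j y < z y + 1 / ((n : ℝ) + 1) :=
        frequently_lt_of_liminf_lt hb2.isCoboundedUnder_ge (lt_add_of_pos_right _ hpos)
      have f2 : ∀ᶠ j in atTop, z y - 1 / ((n : ℝ) + 1) < u j y :=
        eventually_lt_of_lt_liminf (sub_lt_self _ hpos) hb1
      have f3 : ∀ᶠ j in atTop, u j y ≠ z y := not_frequently.1 hq
      obtain ⟨j, hj, hj2, hj3⟩ := (f1.and_eventually (f2.and f3)).exists
      refine ⟨j, Or.inr ⟨hq, hj3, ?_⟩⟩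
      rw [abs_lt]; constructor <;> linarith
  have hQm : MeasurableSet {y | Q y} := by
    have : {y | Q y} = ⋂ N : ℕ, ⋃ j : ℕ, ⋃ (_ : N ≤ j), {y | u j y = z y} := by
      ext y; simp [Q, frequently_atTop]
    rw [this]
    exact MeasurableSet.iInter fun N => MeasurableSet.iUnion fun j => MeasurableSet.iUnion fun _ =>
      measurableSet_eq_fun (hu j) hz
  have hPm : ∀ n j, MeasurableSet {y | P n y j} := by
    intro n j
    have e1 : MeasurableSet {y | u j y = z y} := measurableSet_eq_fun (hu j) hz
    have e2 : MeasurableSet {y | |u j y - z y| < 1 / ((n : ℝ) + 1)} :=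
      measurableSet_lt ((hu j).sub hz).abs measurable_const
    exact (hQm.inter e1).union (hQm.compl.inter (e1.compl.inter e2))
  refine ⟨fun n y => Nat.find (hex n y), fun n => measurable_find (hex n) (hPm n), ?_⟩
  intro y y' a b hab
  have hzz : z y = z y' := by
    have e1 := liminf_nat_add (fun j => u j y) a
    have e2 := liminf_nat_add (fun j => u j y') b
    change liminf (fun j => u j y) atTop = liminf (fun j => u j y') atTop
    rw [← e1, ← e2]
    congr 1; ext j
    rw [add_comm j a, add_comm j b]; exact hab j
  have hQQ : Q y ↔ Q y' := by
    have aux : ∀ (y : Y) (a : ℕ), Q y ↔ ∃ᶠ j in atTop, u (a + j) y = z y := by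
      intro y a
      have := frequently_map (f := atTop) (m := fun j : ℕ => j + a)
        (P := fun j => u j y = z y)
      rw [map_add_atTop_eq_nat] at this
      simp only [add_comm _ a] at this
      exact this
    rw [aux y a, aux y' b]
    simp only [hab, hzz]
  have hPP : ∀ n j, P n y (a + j) ↔ P n y' (b + j) := by
    intro n j
    simp only [P, hab, hzz, hQQ]
  by_cases hq : Q y
  · refine Eventually.of_forall fun n => ?_
    have s1 : P n y _ := Nat.find_spec (hex n y)
    have s2 : P n y' _ := Nat.find_spec (hex n y')
    rcases s1 with s1 | s1
    · rcases s2 with s2 | s2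
      · rw [s1.2, s2.2, hzz]
      · exact absurd (hQQ.1 hq) s2.1
    · exact absurd hq s1.1
  · have large : ∀ y, ¬ Q y → ∀ a : ℕ, ∀ᶠ n in atTop, a ≤ Nat.find (hex n y) := by
      intro y hq a
      have : ∀ j ∈ Set.Iio a, ∀ᶠ n : ℕ in atTop, ¬ P n y j := by
        intro j _
        by_cases hj : u j y = z y
        · refine Eventually.of_forall fun n => ?_
          rintro (h | h)
          · exact hq h.1
          · exact h.2.1 hj
        · have hpos : 0 < |u j y - z y| := abs_pos.2 (sub_ne_zero.2 hj)
          have ht := tendsto_one_div_add_atTop_nhds_zero_nat (𝕜 := ℝ)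
          filter_upwards [ht.eventually_lt_const hpos] with n hn
          rintro (h | h)
          · exact hq h.1
          · exact absurd h.2.2 (not_lt.2 hn.le)
      rw [← Filter.eventually_all_finite (Set.finite_Iio a)] at this
      filter_upwards [this] with n hn
      by_contra hlt
      exact hn _ (not_le.1 hlt) (Nat.find_spec (hex n y))
    filter_upwards [large y hq a, large y' (fun h => hq (hQQ.2 h)) b] with n h1 h2
    obtain ⟨i, hi⟩ := Nat.exists_eq_add_of_le h1
    obtain ⟨i', hi'⟩ := Nat.exists_eq_add_of_le h2
    have s1 : P n y (a + i) := hi ▸ Nat.find_spec (hex n y)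
    have s2 : P n y' (b + i') := hi' ▸ Nat.find_spec (hex n y')
    have l1 : b + i' ≤ b + i := hi' ▸ Nat.find_min' (hex n y') ((hPP n i).1 s1)
    have l2 : a + i ≤ a + i' := hi ▸ Nat.find_min' (hex n y) ((hPP n i').2 s2)
    have : i = i' := by omega
    rw [hi, hi', this, hab]

variable {V : Type*} (T : SimpleGraph V)

lemma aux_iter (m : ℕ) (v : Geo T) (n : ℕ) : ((geoShift T)^[m] v).1 n = v.1 (m + n) := by
  induction m generalizing v with
  | zero => simp
  | succ m ih =>
    rw [Function.iterate_succ_apply, ih]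
    exact congrArg v.1 (by omega)

lemma aux_tail (v w : Geo T) : tailRel T v w ↔ ∃ a b, ∀ j, v.1 (a + j) = w.1 (b + j) := by
  constructor
  · intro h
    induction h with
    | rel v w h =>
      obtain ⟨m, rfl⟩ := h
      exact ⟨m, 0, fun j => by rw [aux_iter, zero_add]⟩
    | refl v => exact ⟨0, 0, fun _ => rfl⟩
    | symm v w _ ih =>
      obtain ⟨a, b, h⟩ := ih
      exact ⟨b, a, fun j => (h j).symm⟩
    | trans x y z _ _ ih1 ih2 =>
      obtain ⟨a, b, h⟩ := ih1
      obtain ⟨a', b', h'⟩ := ih2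
      refine ⟨a + a', b' + b, fun j => ?_⟩
      have e1 := h (a' + j)
      have e2 := h' (b + j)
      rw [add_assoc, e1, add_assoc, ← e2]
      exact congrArg y.1 (by omega)
  · rintro ⟨a, b, h⟩
    have : (geoShift T)^[a] v = (geoShift T)^[b] w := by
      apply Subtype.ext; funext j
      rw [aux_iter, aux_iter, h]
    refine Relation.EqvGen.trans _ _ _ (Relation.EqvGen.rel _ _ ⟨a, rfl⟩) ?_
    rw [this]
    exact Relation.EqvGen.symm _ _ (Relation.EqvGen.rel _ _ ⟨b, rfl⟩)

lemma aux_walk (v : Geo T) (n : ℕ) : ∃ p : T.Walk (v.1 0) (v.1 n), p.IsPath ∧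
    p.support = (List.range (n + 1)).map v.1 := by
  have : ∃ p : T.Walk (v.1 0) (v.1 n), p.support = (List.range (n + 1)).map v.1 := by
    induction n with
    | zero => exact ⟨SimpleGraph.Walk.nil, by simp⟩
    | succ n ih =>
      obtain ⟨p, hp⟩ := ih
      refine ⟨p.concat (v.2.2 n), ?_⟩
      rw [SimpleGraph.Walk.support_concat, hp, List.range_succ (n := n + 1)]
      simp
  obtain ⟨p, hp⟩ := this
  refine ⟨p, ?_, hp⟩
  rw [SimpleGraph.Walk.isPath_def, hp]
  exact List.nodup_range.map v.2.1

lemma aux_unique (hT : T.IsAcyclic) (v w : Geo T) (h : tailRel T v w) (h0 : v.1 0 = w.1 0) :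
    v = w := by
  obtain ⟨a, b, hab⟩ := (aux_tail T v w).1 h
  have key : ∀ j, (List.range (a + j + 1)).map v.1 = (List.range (b + j + 1)).map w.1 := by
    intro j
    obtain ⟨p, hp, hps⟩ := aux_walk T v (a + j)
    obtain ⟨q, hq, hqs⟩ := aux_walk T w (b + j)
    have e : p.copy h0 (hab j) = q := by
      have := (hT.subsingleton_path _ _).elim
        ⟨p.copy h0 (hab j), by simpa using hp⟩ ⟨q, hq⟩
      exact congrArg Subtype.val this
    rw [← hps, ← hqs, ← e, SimpleGraph.Walk.support_copy]
  apply Subtype.ext; funext j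
  have e := key j
  have hlen := congrArg List.length e
  simp at hlen
  subst hlen
  have := congrArg (fun l => l[j]?) e
  simpa [List.getElem?_range (show j < a + j + 1 by omega)] using this

variable {T}

/-- Prepend a list to a shift of a sequence. -/
def auxCand (q : List V) (a : ℕ) (v : ℕ → V) : ℕ → V :=
  fun n => if h : n < q.length then q[n] else v (a + (n - q.length))

open Classical in
/-- Prepend a list to a shift of a geodesic, when this gives a geodesic. -/
noncomputable def auxMove (i : List V × ℕ) (v : Geo T) : Geo T :=
  if h : auxCand i.1 i.2 v.1 ∈ Geo T then ⟨_, h⟩ else v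

lemma auxMove_tail (v w : Geo T) : tailRel T v w ↔ ∃ i, auxMove i v = w := by
  constructor
  · intro h
    obtain ⟨a, b, hab⟩ := (aux_tail T v w).1 h
    have e : auxCand ((List.range b).map w.1) a v.1 = w.1 := by
      funext n
      unfold auxCand
      split_ifs with hn
      · simp
      · simp at hn
        rw [hab]; exact congrArg w.1 (by simp; omega)
    refine ⟨((List.range b).map w.1, a), ?_⟩
    unfold auxMove
    rw [dif_pos (by rw [e]; exact w.2)]
    exact Subtype.ext e
  · rintro ⟨i, rfl⟩
    unfold auxMove
    split_ifs with h
    · refine (aux_tail _ _ _).2 ⟨i.2, i.1.length, fun j => ?_⟩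
      simp [auxCand]
    · exact Relation.EqvGen.refl _

section Meas

variable [Countable V] [MeasurableSpace V] [DiscreteMeasurableSpace V]

lemma aux_measurableSet_geo : MeasurableSet (Geo T) := by
  have : Geo T = (⋂ i : ℕ, ⋂ j : ℕ, {v : ℕ → V | v i = v j → i = j}) ∩
      ⋂ n : ℕ, (fun v : ℕ → V => (v n, v (n + 1))) ⁻¹' {p | T.Adj p.1 p.2} := by
    ext v; simp [Geo, Function.Injective]
  rw [this]
  refine (MeasurableSet.iInter fun i => MeasurableSet.iInter fun j => ?_).inter
    (MeasurableSet.iInter fun n => ?_)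
  · by_cases hij : i = j
    · simp [hij]
    · simp only [hij, imp_false]
      exact (measurableSet_eq_fun (measurable_pi_apply i) (measurable_pi_apply j)).compl
  · exact ((measurable_pi_apply n).prodMk (measurable_pi_apply (n + 1))) (MeasurableSet.of_discrete)

lemma aux_coord (n : ℕ) : Measurable fun v : Geo T => v.1 n :=
  (measurable_pi_apply n).comp measurable_subtype_coe

lemma aux_measurable_move (i : List V × ℕ) : Measurable (auxMove i : Geo T → Geo T) := by
  classical
  have hc : Measurable fun v : Geo T => auxCand i.1 i.2 v.1 := by
    refine measurable_pi_lambda _ fun n => ?_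
    unfold auxCand
    split_ifs
    · exact measurable_const
    · exact aux_coord _
  refine Measurable.subtype_mk (p := (· ∈ Geo T)) (f := fun v => (auxMove i v).1) ?_
    (h := fun v => (auxMove i v).2)
  have : (fun v : Geo T => (auxMove i v).1) = fun v =>
      if auxCand i.1 i.2 v.1 ∈ Geo T then auxCand i.1 i.2 v.1 else v.1 := by
    funext v; unfold auxMove; split_ifs <;> rfl
  rw [this]
  exact Measurable.ite (hc aux_measurableSet_geo) hc measurable_subtype_coe

lemma aux_measurable_shift (m : ℕ) : Measurable ((geoShift T)^[m]) := by
  have : Measurable (geoShift T) :=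
    Measurable.subtype_mk (measurable_pi_lambda _ fun n => aux_coord _)
  exact this.iterate m

variable {G : Type*} [Group G] [MulAction G V]

lemma aux_measurable_smul (h : IsGraphAction T G) (g : G) : Measurable (geoSmul h g) :=
  Measurable.subtype_mk (measurable_pi_lambda _ fun n =>
    (Measurable.of_discrete (f := fun x : V => g • x)).comp (aux_coord _))

end Meas

variable {G : Type*} [Group G] [MulAction G V]

lemma aux_geoRel_equiv (h : IsGraphAction T G) : Equivalence (geoRel h) := by
  refine ⟨fun v => ⟨1, ?_⟩, ?_, ?_⟩
  · apply Subtype.ext; funext n; exact one_smul _ _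
  · rintro v _ ⟨g, rfl⟩
    refine ⟨g⁻¹, ?_⟩
    apply Subtype.ext; funext n; exact inv_smul_smul _ _
  · rintro v _ _ ⟨g, rfl⟩ ⟨g', rfl⟩
    refine ⟨g' * g, ?_⟩
    apply Subtype.ext; funext n; exact mul_smul _ _ _

lemma aux_bdryRel_equiv (h : IsGraphAction T G) : Equivalence (bdryRel h) := by
  have key : ∀ g v w, geoSmul h g v = w → bdrySmul h g (Quotient.mk (tailSetoid T) v) =
    Quotient.mk (tailSetoid T) w := by rintro g v _ rfl; rfl
  refine ⟨fun x => ?_, fun {x y} => ?_, fun {x y z} => ?_⟩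
  · induction x using Quotient.inductionOn with | _ v
    obtain ⟨g, hg⟩ := (aux_geoRel_equiv h).refl v
    exact ⟨g, key _ _ _ hg⟩
  · rintro ⟨g, rfl⟩
    induction x using Quotient.inductionOn with | _ v
    obtain ⟨g', hg⟩ := (aux_geoRel_equiv h).symm ⟨g, rfl⟩
    exact ⟨g', key _ _ _ hg⟩
  · rintro ⟨g, rfl⟩ ⟨g', rfl⟩
    induction x using Quotient.inductionOn with | _ v
    obtain ⟨g', hg⟩ := (aux_geoRel_equiv h).trans ⟨g, rfl⟩ ⟨g', rfl⟩
    exact ⟨g', key _ _ _ hg⟩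

lemma aux_bdryRel_iff (h : IsGraphAction T G) (v w : Geo T) :
    bdryRel h (Quotient.mk (tailSetoid T) v) (Quotient.mk (tailSetoid T) w) ↔
      ∃ i : G × (List V × ℕ), auxMove i.2 (geoSmul h i.1 v) = w := by
  have : ∀ g, bdrySmul h g (Quotient.mk (tailSetoid T) v) = Quotient.mk (tailSetoid T) w ↔
      tailRel T (geoSmul h g v) w := fun g => Quotient.eq (r := tailSetoid T)
  simp only [bdryRel, this, auxMove_tail, Prod.exists]

lemma aux_selector_G [Countable V] [MeasurableSpace V] [DiscreteMeasurableSpace V] [Countable G]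
    (hact : IsGraphAction T G)
    (hstab : ∀ v : Geo T, ∃ n : ℕ, initStab G v.1 n = ptwiseStab G v.1) :
    ∃ s : Geo T → Geo T, Measurable s ∧ (∀ v, geoRel hact v (s v)) ∧
      ∀ v w, geoRel hact v w → s v = s w := by
  classical
  obtain ⟨code, hcode⟩ := exists_injective_nat (List V)
  have hnm : Measurable fun v : Geo T => Nat.find (hstab v) := by
    refine measurable_find hstab fun k => ?_
    have : {v : Geo T | initStab G v.1 k = ptwiseStab G v.1} =
        ⋂ g : G, ({v : Geo T | ∀ j, j ≤ k → g • v.1 j = v.1 j}ᶜ ∪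
          {v : Geo T | ∀ j, g • v.1 j = v.1 j}) := by
      ext v
      simp only [Set.mem_ofPred_eq, Set.mem_iInter, Set.mem_union, Set.mem_compl_iff]
      constructor
      · intro h g
        by_cases hg : ∀ j, j ≤ k → g • v.1 j = v.1 j
        · right
          have : g ∈ initStab G v.1 k := hg
          rw [h] at this
          exact this
        · exact Or.inl hg
      · intro h
        ext g
        constructor
        · intro hg
          exact (h g).resolve_left (not_not.2 hg)
        · intro hg j _
          exact hg j
    rw [this]
    have hone : ∀ (g : G) (j : ℕ), MeasurableSet {v : Geo T | g • v.1 j = v.1 j} := fun g j =>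
      (aux_coord j) (MeasurableSet.of_discrete (s := {x : V | g • x = x}))
    refine MeasurableSet.iInter fun g => MeasurableSet.union (MeasurableSet.compl ?_) ?_
    · simp only [Set.ofPred_forall]
      exact MeasurableSet.iInter fun j => MeasurableSet.iInter fun _ => hone g j
    · simp only [Set.ofPred_forall]
      exact MeasurableSet.iInter fun j => hone g j
  have hseg : ∀ n : ℕ, Measurable fun v : Geo T => code ((List.range n).map v.1) := by
    intro n
    refine measurable_to_countable' fun c => ?_
    by_cases hc : ∃ l, code l = c
    · obtain ⟨l, rfl⟩ := hc
      have : (fun v : Geo T => code ((List.range n).map v.1)) ⁻¹' {code l} =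
          ⋂ i : ℕ, {v : Geo T | ((List.range n)[i]?).map v.1 = l[i]?} := by
        ext v
        simp only [Set.mem_preimage, Set.mem_singleton_iff, hcode.eq_iff, Set.mem_iInter,
          Set.mem_ofPred_eq, List.ext_getElem?_iff, List.getElem?_map]
      rw [this]
      refine MeasurableSet.iInter fun i => ?_
      rcases (List.range n)[i]? with _ | j
      · simp
      · exact (aux_coord j) (MeasurableSet.of_discrete (s := {x : V | some x = l[i]?}))
    · convert MeasurableSet.empty
      ext v
      simp only [Set.mem_preimage, Set.mem_singleton_iff, Set.mem_empty_iff_false, iff_false]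
      exact fun h => hc ⟨_, h⟩
  refine aux_selector (fun g : G => geoSmul hact g) (aux_measurable_smul hact) (geoRel hact)
    (aux_geoRel_equiv hact) (fun v w => Iff.rfl)
    (fun v => code ((List.range (Nat.find (hstab v) + 1)).map v.1)) ?_ ?_
  · have : Measurable fun p : ℕ × Geo T => code ((List.range (p.1 + 1)).map p.2.1) :=
      measurable_from_prod_countable_right fun n => hseg (n + 1)
    exact this.comp (hnm.prodMk measurable_id)
  · rintro v w ⟨g, rfl⟩ h
    have h := hcode h
    have hlen := congrArg List.length h
    simp only [List.length_map, List.length_range, Nat.add_right_cancel_iff] at hlen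
    rw [← hlen] at h
    have hg : g ∈ initStab G v.1 (Nat.find (hstab v)) := by
      intro k hk
      have := List.map_inj_left.1 h k (List.mem_range.2 (by omega))
      exact this.symm
    rw [Nat.find_spec (hstab v)] at hg
    apply Subtype.ext; funext k
    exact (hg k).symm

end Aux

/-! ### STATEMENT 0 -/

theorem boundary_action_hyperfinite_of_stabilized_initial_segments
    {V : Type*} [Countable V] [MeasurableSpace V] [DiscreteMeasurableSpace V]
    (T : SimpleGraph V) (hT : T.IsTree)
    {G : Type*} [Group G] [Countable G] [MulAction G V]
    (hact : IsGraphAction T G)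
    (hstab : ∀ v : Geo T, ∃ n : ℕ, initStab G v.1 n = ptwiseStab G v.1) :
    Hyperfinite (bdryRel hact) := by
  classical
  obtain ⟨s, hsm, hs1, hs2⟩ := aux_selector_G hact hstab
  -- section of the boundary
  obtain ⟨codeV, hcodeV⟩ := exists_injective_nat V
  obtain ⟨r, hrm, hr1, hr2⟩ := aux_selector (auxMove : List V × ℕ → Geo T → Geo T)
    aux_measurable_move (tailRel T) (Relation.EqvGen.is_equivalence _) auxMove_tail
    (fun v => codeV (v.1 0)) ((Measurable.of_discrete (f := codeV)).comp (aux_coord 0))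
    (fun v w h h0 => aux_unique T hT.isAcyclic v w h (hcodeV h0))
  let ρ : Bdry T → Geo T := Quotient.lift (s := tailSetoid T) r hr2
  have hρm : Measurable ρ := measurable_from_quotient.2 hrm
  have hρ : ∀ x, Quotient.mk (tailSetoid T) (ρ x) = x := by
    intro x
    induction x using Quotient.inductionOn with | _ v
    exact Quotient.sound (s := tailSetoid T) (Relation.EqvGen.symm _ _ (hr1 v))
  -- embedding in the reals
  obtain ⟨φ, hφm, hφi, hφb⟩ : ∃ φ : Geo T → ℝ, Measurable φ ∧ Function.Injective φ ∧
      ∀ v, |φ v| ≤ 2 := by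
    obtain ⟨f, hf⟩ := exists_measurableEmbedding_real (ℕ → V)
    refine ⟨fun v => Real.arctan (f v.1),
      Real.measurable_arctan.comp (hf.measurable.comp measurable_subtype_coe), ?_, ?_⟩
    · intro v w h
      exact Subtype.ext (hf.injective (Real.arctan_injective h))
    · intro v
      have h1 := Real.arctan_lt_pi_div_two (f v.1)
      have h2 := Real.neg_pi_div_two_lt_arctan (f v.1)
      have h3 := Real.pi_le_four
      rw [abs_le]; constructor <;> linarith
  have hEq : ∀ {X : Type _} [MeasurableSpace X] (f g : X → Geo T), Measurable f → Measurable g →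
      MeasurableSet {x | f x = g x} := by
    intro X _ f g hf hg
    have : {x | f x = g x} = {x | φ (f x) = φ (g x)} := by
      ext x; exact hφi.eq_iff.symm
    rw [this]
    exact measurableSet_eq_fun (hφm.comp hf) (hφm.comp hg)
  -- markers
  obtain ⟨k, hkm, hk⟩ := aux_marker (fun j (v : Geo T) => φ (s ((geoShift T)^[j] v)))
    (fun j => hφm.comp (hsm.comp (aux_measurable_shift j))) 2 (fun _ _ => hφb _)
  let t : ℕ → Bdry T → Geo T := fun n x =>
    match n with
    | 0 => ρ x
    | m + 1 => s ((geoShift T)^[k m (ρ x)] (ρ x))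
  have htm : ∀ n, Measurable (t n) := by
    intro n
    cases n with
    | zero => exact hρm
    | succ m =>
      have h1 : Measurable fun p : ℕ × Geo T => s ((geoShift T)^[p.1] p.2) :=
        measurable_from_prod_countable_right fun n => hsm.comp (aux_measurable_shift n)
      exact h1.comp (((hkm m).comp hρm).prodMk hρm)
  have hEE := aux_bdryRel_equiv hact
  have htE : ∀ n x, bdryRel hact x (Quotient.mk (tailSetoid T) (t n x)) := by
    intro n x
    cases n with
    | zero =>
      change bdryRel hact x (Quotient.mk (tailSetoid T) (ρ x))
      rw [hρ]; exact hEE.refl x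
    | succ m =>
      obtain ⟨g, hg⟩ := hs1 ((geoShift T)^[k m (ρ x)] (ρ x))
      refine ⟨g, ?_⟩
      change _ = Quotient.mk (tailSetoid T) (s ((geoShift T)^[k m (ρ x)] (ρ x)))
      rw [← hg]
      conv_lhs => rw [← hρ x]
      refine Quotient.sound (s := tailSetoid T) (tailRel_geoSmul hact g ?_)
      exact Relation.EqvGen.rel _ _ ⟨_, rfl⟩
  have htev : ∀ x y, bdryRel hact x y → ∀ᶠ n in atTop, t n x = t n y := by
    intro x y hxy
    rw [← hρ x, ← hρ y] at hxy
    obtain ⟨g, hg⟩ := hxy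
    have hg : tailRel T (geoSmul hact g (ρ x)) (ρ y) := Quotient.exact (s := tailSetoid T) hg
    obtain ⟨a, b, hab⟩ := (aux_tail T _ _).1 hg
    have hu : ∀ j, φ (s ((geoShift T)^[a + j] (ρ x))) = φ (s ((geoShift T)^[b + j] (ρ y))) := by
      intro j
      congr 1
      refine hs2 _ _ ⟨g, ?_⟩
      apply Subtype.ext; funext i
      rw [aux_iter]
      change g • ((geoShift T)^[a + j] (ρ x)).1 i = _
      rw [aux_iter, add_assoc, add_assoc]
      exact hab (j + i)
    have := hk _ _ a b hu
    obtain ⟨N, hN⟩ := eventually_atTop.1 this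
    refine eventually_atTop.2 ⟨N + 1, fun n hn => ?_⟩
    obtain ⟨m, rfl⟩ : ∃ m, n = m + 1 := ⟨n - 1, by omega⟩
    exact hφi (hN m (by omega))
  -- codes
  obtain ⟨e, he⟩ := exists_surjective_nat (G × (List V × ℕ))
  let mv : ℕ → Geo T → Geo T := fun i v => auxMove (e i).2 (geoSmul hact (e i).1 v)
  have hmv : ∀ i, Measurable (mv i) := fun i =>
    (aux_measurable_move _).comp (aux_measurable_smul hact _)
  have hrel : ∀ v w, bdryRel hact (Quotient.mk (tailSetoid T) v) (Quotient.mk (tailSetoid T) w) ↔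
      ∃ i, mv i v = w := by
    intro v w
    rw [aux_bdryRel_iff]
    exact he.exists
  have hex : ∀ n x, ∃ i, mv i (t (n + 1) x) = t n x := fun n x =>
    (hrel _ _).1 (hEE.trans (hEE.symm (htE (n + 1) x)) (htE n x))
  have hcm : ∀ n, Measurable fun x => Nat.find (hex n x) := fun n =>
    measurable_find (hex n) fun i => hEq _ _ ((hmv i).comp (htm (n + 1))) (htm n)
  refine aux_hyperfinite (bdryRel hact) hEE ?_ (fun n x => Nat.find (hex n x)) hcm ?_ ?_
  · have : {p : Bdry T × Bdry T | bdryRel hact p.1 p.2} =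
        ⋃ i, {p : Bdry T × Bdry T | mv i (ρ p.1) = ρ p.2} := by
      ext p
      simp only [Set.mem_iUnion, Set.mem_ofPred_eq]
      rw [← hrel, hρ, hρ]
    rw [this]
    exact MeasurableSet.iUnion fun i => hEq _ _ ((hmv i).comp (hρm.comp measurable_fst))
      (hρm.comp measurable_snd)
  · intro x y hxy
    obtain ⟨N, hN⟩ := eventually_atTop.1 (htev x y hxy)
    refine eventually_atTop.2 ⟨N, fun n hn => ?_⟩
    simp only [hN n hn, hN (n + 1) (by omega)]
  · intro x y hxy hc
    obtain ⟨N, hN⟩ := eventually_atTop.1 (htev x y hxy)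
    have down : ∀ n, t (n + 1) x = t (n + 1) y → t n x = t n y := by
      intro n h
      have e1 : mv (Nat.find (hex n x)) (t (n + 1) x) = t n x := Nat.find_spec (hex n x)
      have e2 : mv (Nat.find (hex n y)) (t (n + 1) y) = t n y := Nat.find_spec (hex n y)
      have e3 : Nat.find (hex n x) = Nat.find (hex n y) := hc n
      exact e1.symm.trans ((congrArg₂ mv e3 h).trans e2)
    have h0 : ∀ n, t n x = t n y → t 0 x = t 0 y := by
      intro n
      induction n with
      | zero => exact id
      | succ n ih => exact fun h => ih (down n h)
    have : ρ x = ρ y := h0 N (hN N le_rfl)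
    rw [← hρ x, ← hρ y, this]
end

section
/- Let G be a countable group acting by graph automorphisms on a countable tree T, and suppose that every infinite geodesic 𝐯 in T has a finite initial segment σ such that Stab_G(𝐯) is uniformly coamenable in Stab_G(σ). Then the orbit equivalence relation E_G^{∂T} of the induced action of G on the Gromov boundary ∂T is Borel 2-amenable, and in particular measure-hyperfinite. -/
open MeasureTheory Function Filter

/-! ### Part 1: min-wise hashing -/

section MinHash

/-- `z` is the `π`-least element of `B`. -/
def IsPiMin {Z : Type*} [LinearOrder Z] (π : Equiv.Perm Z) (B : Finset Z) (z : Z) : Prop :=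
  z ∈ B ∧ ∀ z' ∈ B, π z ≤ π z'

lemma IsPiMin.unique {Z : Type*} [LinearOrder Z] {π : Equiv.Perm Z} {B : Finset Z} {z z' : Z}
    (h : IsPiMin π B z) (h' : IsPiMin π B z') : z = z' :=
  π.injective (le_antisymm (h.2 _ h'.1) (h'.2 _ h.1))

lemma IsPiMin.exists {Z : Type*} [LinearOrder Z] (π : Equiv.Perm Z) {B : Finset Z}
    (hB : B.Nonempty) : ∃ z, IsPiMin π B z := by
  obtain ⟨z, hz, h⟩ := Finset.exists_min_image B π hB
  exact ⟨z, hz, h⟩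

open Classical in
lemma card_isPiMin {Z : Type*} [LinearOrder Z] [Fintype (Equiv.Perm Z)] (U : Finset Z) {z : Z} (hz : z ∈ U) :
    (Finset.univ.filter fun π : Equiv.Perm Z => IsPiMin π U z).card * U.card
      = Fintype.card (Equiv.Perm Z) := by
  have key : ∀ z' ∈ U, (Finset.univ.filter fun π : Equiv.Perm Z => IsPiMin π U z').card
      = (Finset.univ.filter fun π : Equiv.Perm Z => IsPiMin π U z).card := by
    intro z' hz'
    have hsw : ∀ a ∈ U, Equiv.swap z z' a ∈ U := by
      intro a ha
      rcases Equiv.swap_apply_eq_iff.mp (rfl : Equiv.swap z z' a = _) with h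
      by_cases h1 : a = z
      · subst h1; simpa using hz'
      by_cases h2 : a = z'
      · subst h2; simpa using hz
      rwa [Equiv.swap_apply_of_ne_of_ne h1 h2]
    have fwd : ∀ (π : Equiv.Perm Z) (x : Z), IsPiMin π U x →
        IsPiMin (π * Equiv.swap z z') U (Equiv.swap z z' x) := by
      intro π x hx
      refine ⟨hsw _ hx.1, fun a ha => ?_⟩
      simp only [Equiv.Perm.mul_apply, Equiv.swap_apply_self]
      exact hx.2 _ (hsw a ha)
    apply Finset.card_bij' (fun π _ => π * Equiv.swap z z') (fun π _ => π * Equiv.swap z z')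
    · intro π hπ
      simp only [Finset.mem_filter, Finset.mem_univ, true_and] at hπ ⊢
      simpa using fwd π _ hπ
    · intro π hπ
      simp only [Finset.mem_filter, Finset.mem_univ, true_and] at hπ ⊢
      simpa using fwd π _ hπ
    · intro π _; simp [mul_assoc]
    · intro π _; simp [mul_assoc]
  have hsum : ∑ z' ∈ U, (Finset.univ.filter fun π : Equiv.Perm Z => IsPiMin π U z').card
      = Fintype.card (Equiv.Perm Z) := by
    rw [← Finset.card_univ, ← Finset.card_biUnion]
    · congr 1
      ext π
      simp only [Finset.mem_biUnion, Finset.mem_filter, Finset.mem_univ, true_and, iff_true]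
      obtain ⟨z0, h0⟩ := IsPiMin.exists π ⟨z, hz⟩
      exact ⟨z0, h0.1, h0⟩
    · intro a _ b _ hab
      rw [Function.onFun, Finset.disjoint_left]
      intro π h1 h2
      simp only [Finset.mem_filter, Finset.mem_univ, true_and] at h1 h2
      exact hab (h1.unique h2)
  rw [Finset.sum_congr rfl key, Finset.sum_const, smul_eq_mul] at hsum
  rw [mul_comm, hsum]

open Classical in
/-- The probability that `B` and `B'` have different min-hashes is at most
`|B ∆ B'| / |B ∪ B'|`. -/
lemma card_minhash_bad {Z : Type*} [LinearOrder Z] [Fintype (Equiv.Perm Z)] (B B' : Finset Z)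
    (hB : B.Nonempty) :
    (Finset.univ.filter fun π : Equiv.Perm Z =>
        ¬ ∃ z, IsPiMin π B z ∧ IsPiMin π B' z).card * B.card
      ≤ ((B \ B') ∪ (B' \ B)).card * Fintype.card (Equiv.Perm Z) := by
  have hsub : (Finset.univ.filter fun π : Equiv.Perm Z =>
        ¬ ∃ z, IsPiMin π B z ∧ IsPiMin π B' z) ⊆
      ((B \ B') ∪ (B' \ B)).biUnion fun z =>
        Finset.univ.filter fun π : Equiv.Perm Z => IsPiMin π (B ∪ B') z := by
    intro π hπ
    simp only [Finset.mem_filter, Finset.mem_univ, true_and] at hπ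
    obtain ⟨z, hz⟩ := IsPiMin.exists π (hB.mono (Finset.subset_union_left (s₂ := B')))
    simp only [Finset.mem_biUnion, Finset.mem_filter, Finset.mem_univ, true_and]
    refine ⟨z, ?_, hz⟩
    by_contra hcon
    have hz1 := hz.1
    simp only [Finset.mem_union, Finset.mem_sdiff] at hcon hz1
    have h1 : z ∈ B ∧ z ∈ B' := by tauto
    exact hπ ⟨z, ⟨h1.1, fun a ha => hz.2 a (Finset.mem_union_left _ ha)⟩,
      ⟨h1.2, fun a ha => hz.2 a (Finset.mem_union_right _ ha)⟩⟩
  calc _ ≤ (∑ z ∈ (B \ B') ∪ (B' \ B), (Finset.univ.filter fun π : Equiv.Perm Z =>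
            IsPiMin π (B ∪ B') z).card) * (B ∪ B').card :=
        Nat.mul_le_mul ((Finset.card_le_card hsub).trans Finset.card_biUnion_le)
          (Finset.card_le_card Finset.subset_union_left)
    _ = ∑ z ∈ (B \ B') ∪ (B' \ B), Fintype.card (Equiv.Perm Z) := by
        rw [Finset.sum_mul]
        refine Finset.sum_congr rfl fun z hz => card_isPiMin _ ?_
        simp only [Finset.mem_union, Finset.mem_sdiff] at hz ⊢
        tauto
    _ = _ := by rw [Finset.sum_const, smul_eq_mul]

/-- Levels sets of integer weights, coloured by an injective colouring. -/
lemma card_levels {X C : Type*} {N : ℕ} (Y : Finset X) (c : X → C) (hc : Set.InjOn c Y)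
    (w w' : X → ℕ) (hw : ∀ y ∈ Y, w y ≤ N) (hw' : ∀ y ∈ Y, w' y ≤ N)
    (B B' : Finset (C × Fin N)) [DecidableEq (C × Fin N)]
    (hB : ∀ z, z ∈ B ↔ ∃ y ∈ Y, c y = z.1 ∧ (z.2 : ℕ) < w y)
    (hB' : ∀ z, z ∈ B' ↔ ∃ y ∈ Y, c y = z.1 ∧ (z.2 : ℕ) < w' y) :
    B.card = ∑ y ∈ Y, w y ∧
    (((B \ B') ∪ (B' \ B)).card : ℝ) ≤ ∑ y ∈ Y, |(w y : ℝ) - w' y| := by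
  classical
  have hcount : ∀ n ≤ N, (Finset.univ.filter fun t : Fin N => (t : ℕ) < n).card = n := by
    intro n hn
    rw [Fin.card_filter_val_lt]; simp [hn]
  have hinj : Set.InjOn (fun a : (_ : X) × Fin N => (c a.1, a.2))
      (Y.sigma (fun y => Finset.univ.filter fun t : Fin N => (t : ℕ) < w y)) := by
    rintro ⟨y, t⟩ h ⟨y', t'⟩ h' heq
    simp only [Finset.coe_sigma, Set.mem_sigma_iff, Finset.mem_coe] at h h'
    simp only [Prod.mk.injEq] at heq
    obtain rfl := hc h.1 h'.1 heq.1
    rw [heq.2]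
  constructor
  · have : B = (Y.sigma (fun y => Finset.univ.filter fun t : Fin N => (t : ℕ) < w y)).image
        (fun a => (c a.1, a.2)) := by
      ext ⟨d, t⟩
      simp only [hB, Finset.mem_image, Finset.mem_sigma, Finset.mem_filter, Finset.mem_univ,
        true_and, Prod.mk.injEq, Sigma.exists]
      constructor
      · rintro ⟨y, h1, h2, h3⟩; exact ⟨y, t, ⟨h1, h3⟩, h2, rfl⟩
      · rintro ⟨y, _, ⟨h1, h3⟩, h2, rfl⟩; exact ⟨y, h1, h2, h3⟩
    rw [this, Finset.card_image_of_injOn hinj, Finset.card_sigma]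
    exact Finset.sum_congr rfl fun y hy => hcount _ (hw y hy)
  · have hsub : (B \ B') ∪ (B' \ B) ⊆
        (Y.sigma (fun y => (Finset.univ.filter fun t : Fin N => (t : ℕ) < w y ∧ ¬ (t : ℕ) < w' y) ∪
          (Finset.univ.filter fun t : Fin N => (t : ℕ) < w' y ∧ ¬ (t : ℕ) < w y))).image
        (fun a => (c a.1, a.2)) := by
      rintro ⟨d, t⟩ hz
      simp only [Finset.mem_union, Finset.mem_sdiff, hB, hB', not_exists, not_and] at hz
      simp only [Finset.mem_image, Finset.mem_sigma, Finset.mem_filter, Finset.mem_univ,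
        true_and, Prod.mk.injEq, Sigma.exists, Finset.mem_union]
      rcases hz with ⟨⟨y, h1, h2, h3⟩, h4⟩ | ⟨⟨y, h1, h2, h3⟩, h4⟩
      · exact ⟨y, t, ⟨h1, Or.inl ⟨h3, h4 y h1 h2⟩⟩, h2, rfl⟩
      · exact ⟨y, t, ⟨h1, Or.inr ⟨h3, h4 y h1 h2⟩⟩, h2, rfl⟩
    have hle := (Finset.card_le_card hsub).trans Finset.card_image_le
    rw [Finset.card_sigma] at hle
    refine (Nat.cast_le.mpr hle).trans ?_
    push_cast
    refine Finset.sum_le_sum fun y hy => ?_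
    have aux : ∀ a b : ℕ, a ≤ N → b ≤ N →
        ((Finset.univ.filter fun t : Fin N => (t : ℕ) < a ∧ ¬ (t : ℕ) < b).card) = a - b := by
      intro a b ha hb
      have : (Finset.univ.filter fun t : Fin N => (t : ℕ) < a ∧ ¬ (t : ℕ) < b) =
        (Finset.univ.filter fun t : Fin N => (t : ℕ) < a) \
          (Finset.univ.filter fun t : Fin N => (t : ℕ) < min a b) := by
        ext t; simp; omega
      rw [this, Finset.card_sdiff_of_subset, hcount _ ha, hcount _ (by omega)]
      · omega
      · intro t; simp; omega
    have h1 := Finset.card_union_le (Finset.univ.filter fun t : Fin N => (t : ℕ) < w y ∧ ¬ (t : ℕ) < w' y)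
          (Finset.univ.filter fun t : Fin N => (t : ℕ) < w' y ∧ ¬ (t : ℕ) < w y)
    rw [aux _ _ (hw y hy) (hw' y hy), aux _ _ (hw' y hy) (hw y hy)] at h1
    refine (Nat.cast_le.mpr h1).trans ?_
    rcases le_total (w y) (w' y) with h | h
    · rw [Nat.sub_eq_zero_of_le h, zero_add, Nat.cast_sub h, abs_sub_comm]; exact le_abs_self _
    · rw [Nat.sub_eq_zero_of_le h, add_zero, Nat.cast_sub h]; exact le_abs_self _

open Classical in
lemma minhash_levels {X C : Type*} {N : ℕ} [LinearOrder (C × Fin N)]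
    [Fintype (Equiv.Perm (C × Fin N))]
    (Y : Finset X) (c : X → C) (hc : Set.InjOn c Y)
    (w w' : X → ℕ) (hw : ∀ y ∈ Y, w y ≤ N) (hw' : ∀ y ∈ Y, w' y ≤ N)
    (B B' : Finset (C × Fin N))
    (hB : ∀ z, z ∈ B ↔ ∃ y ∈ Y, c y = z.1 ∧ (z.2 : ℕ) < w y)
    (hB' : ∀ z, z ∈ B' ↔ ∃ y ∈ Y, c y = z.1 ∧ (z.2 : ℕ) < w' y)
    (hpos : 0 < ∑ y ∈ Y, (w y : ℝ)) :
    ((Finset.univ.filter fun π : Equiv.Perm (C × Fin N) =>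
        ¬ ∃ z, IsPiMin π B z ∧ IsPiMin π B' z).card : ℝ) * ∑ y ∈ Y, (w y : ℝ)
      ≤ (∑ y ∈ Y, |(w y : ℝ) - w' y|) * Fintype.card (Equiv.Perm (C × Fin N)) := by
  obtain ⟨h1, h2⟩ := @card_levels X C N Y c hc w w' hw hw' B B' LinearOrder.toDecidableEq hB hB'
  have h3 : (B.card : ℝ) = ∑ y ∈ Y, (w y : ℝ) := by rw [h1]; push_cast; rfl
  have hne : B.Nonempty := by
    rw [← h3] at hpos
    exact Finset.card_pos.mp (by exact_mod_cast hpos)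
  have h4 := card_minhash_bad B B' hne
  rw [← h3]
  refine le_trans ?_ (mul_le_mul_of_nonneg_right h2 (Nat.cast_nonneg _))
  exact_mod_cast h4

open Classical in
lemma minhash_levels_gen {X C : Type*} {N : ℕ} [LinearOrder (C × Fin N)]
    [Finite (Equiv.Perm (C × Fin N))]
    (Y : Finset X) (c : X → C) (hc : Set.InjOn c Y)
    (w w' : X → ℕ) (hw : ∀ y ∈ Y, w y ≤ N) (hw' : ∀ y ∈ Y, w' y ≤ N)
    (B B' : Finset (C × Fin N))
    (hB : ∀ z, z ∈ B ↔ ∃ y ∈ Y, c y = z.1 ∧ (z.2 : ℕ) < w y)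
    (hB' : ∀ z, z ∈ B' ↔ ∃ y ∈ Y, c y = z.1 ∧ (z.2 : ℕ) < w' y)
    (hpos : 0 < ∑ y ∈ Y, (w y : ℝ)) (F : Finset (Equiv.Perm (C × Fin N)))
    (hF : ∀ π ∈ F, ¬ ∃ z, IsPiMin π B z ∧ IsPiMin π B' z) :
    (F.card : ℝ) * ∑ y ∈ Y, (w y : ℝ)
      ≤ (∑ y ∈ Y, |(w y : ℝ) - w' y|) * Nat.card (Equiv.Perm (C × Fin N)) := by
  have := Fintype.ofFinite (Equiv.Perm (C × Fin N))
  have h := minhash_levels Y c hc w w' hw hw' B B' hB hB' hpos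
  rw [Nat.card_eq_fintype_card]
  refine le_trans (mul_le_mul_of_nonneg_right (Nat.cast_le.mpr
    (Finset.card_le_card fun π hπ => ?_)) hpos.le) h
  exact Finset.mem_filter.mpr ⟨Finset.mem_univ _, hF π hπ⟩

end MinHash


/-! ### Part 2: amenable implies hyperfinite almost everywhere -/

section CFW

lemma exhaust_measure {X : Type*} [MeasurableSpace X] (μ : Measure X) (P : Set X) (Q : ℕ → Set X)
    (h : ∀ x ∈ P, ∀ᶠ n in atTop, x ∈ Q n) {a : ENNReal} (ha : a < μ P) :
    ∃ n, a < μ (P ∩ Q n) := by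
  have hmono : Monotone fun n => P ∩ {x | ∀ m, n ≤ m → x ∈ Q m} := by
    intro n n' hn x hx
    exact ⟨hx.1, fun m hm => hx.2 m (hn.trans hm)⟩
  have hU : (⋃ n, P ∩ {x | ∀ m, n ≤ m → x ∈ Q m}) = P := by
    ext x
    simp only [Set.mem_iUnion]
    constructor
    · rintro ⟨n, hn⟩; exact hn.1
    · intro hx
      obtain ⟨n, hn⟩ := eventually_atTop.mp (h x hx)
      exact ⟨n, hx, hn⟩
  rw [← hU, hmono.measure_iUnion, lt_iSup_iff] at ha
  obtain ⟨n, hn⟩ := ha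
  refine ⟨n, hn.trans_le (measure_mono ?_)⟩
  intro x hx
  exact ⟨hx.1, hx.2 n le_rfl⟩

open Classical in
/-- Averaging over a finite set of parameters. -/
lemma exists_avg_measure {X : Type*} [MeasurableSpace X] (μ : Measure X) [IsProbabilityMeasure μ]
    {I : Type*} [Fintype I] [Nonempty I] (Q : I → Set X) (hQ : ∀ i, MeasurableSet (Q i))
    (P : Set X) (θ : ℝ) (hθ : 0 ≤ θ)
    (hP : ∀ x ∈ P, ((Finset.univ.filter fun i => x ∈ Q i).card : ℝ) ≤ θ * Fintype.card I)
    (η : ℝ) (hPm : ENNReal.ofReal (1 - η) < μ P) :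
    ∃ i, μ.real (Q i) ≤ θ + η := by
  set f : X → ℝ := fun x => ∑ i, (Q i).indicator (fun _ => (1 : ℝ)) x with hf
  have hfc : ∀ x, f x = ((Finset.univ.filter fun i => x ∈ Q i).card : ℝ) := by
    intro x
    simp [hf, Set.indicator_apply]
  have hfm : Measurable f := by
    refine Finset.measurable_sum _ fun i _ => ?_
    exact measurable_const.indicator (hQ i)
  set R : Set X := {x | f x ≤ θ * Fintype.card I} with hR
  have hRm : MeasurableSet R := measurableSet_le hfm measurable_const
  have hPR : P ⊆ R := fun x hx => by
    have := hP x hx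
    rwa [← hfc] at this
  have hRc : μ.real Rᶜ ≤ η := by
    rw [probReal_compl_eq_one_sub hRm]
    have h1 : ENNReal.ofReal (1 - η) ≤ μ R := hPm.le.trans (measure_mono hPR)
    have h2 : 1 - η ≤ μ.real R := by
      rw [ENNReal.ofReal_le_iff_le_toReal (measure_ne_top _ _)] at h1
      exact h1
    linarith
  have hcard : (0 : ℝ) < Fintype.card I := by exact_mod_cast Fintype.card_pos
  have hbound : ∀ x, f x ≤ θ * Fintype.card I + Rᶜ.indicator (fun _ => (Fintype.card I : ℝ)) x := by
    intro x
    by_cases hx : x ∈ R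
    · have : x ∉ Rᶜ := fun h => h hx
      rw [Set.indicator_of_notMem this, add_zero]; exact hx
    · have : x ∈ Rᶜ := hx
      rw [Set.indicator_of_mem this, hfc]
      have : ((Finset.univ.filter fun i => x ∈ Q i).card : ℝ) ≤ Fintype.card I := by
        exact_mod_cast Finset.card_le_univ _
      have := mul_nonneg hθ hcard.le
      linarith
  have hIntQ : ∀ i, Integrable ((Q i).indicator (fun _ => (1 : ℝ))) μ := fun i =>
    (integrable_const 1).indicator (hQ i)
  have hsum : ∑ i, μ.real (Q i) = ∫ x, f x ∂μ := by
    rw [hf, integral_finsetSum _ fun i _ => hIntQ i]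
    refine Finset.sum_congr rfl fun i _ => ?_
    rw [integral_indicator_const _ (hQ i)]; simp
  have hle : ∑ i, μ.real (Q i) ≤ (θ + η) * Fintype.card I := by
    rw [hsum]
    calc ∫ x, f x ∂μ ≤ ∫ x, (θ * Fintype.card I
            + Rᶜ.indicator (fun _ => (Fintype.card I : ℝ)) x) ∂μ := by
          refine integral_mono (integrable_finsetSum _ fun i _ => hIntQ i) ?_ hbound
          exact (integrable_const _).add ((integrable_const _).indicator hRm.compl)
      _ = θ * Fintype.card I + μ.real Rᶜ * Fintype.card I := by
          rw [integral_add (integrable_const _) ((integrable_const _).indicator hRm.compl),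
            integral_indicator_const _ hRm.compl]
          simp
      _ ≤ _ := by nlinarith
  by_contra hcon
  push Not at hcon
  have : ∑ i : I, (θ + η) < ∑ i, μ.real (Q i) :=
    Finset.sum_lt_sum_of_nonempty Finset.univ_nonempty fun i _ => hcon i
  rw [Finset.sum_const, nsmul_eq_mul, Finset.card_univ] at this
  linarith

/-- The Borel-Cantelli argument: approximate almost invariant finite subrelations give
hyperfiniteness almost everywhere. -/
lemma muHyperfinite_of_approx {X : Type*} [MeasurableSpace X] (μ : Measure X)
    {G : Type*} [Group G] [Countable G] [MulAction G X]
    (hsm : ∀ g : G, Measurable fun x : X => g • x)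
    (E : X → X → Prop) (hE : ∀ x y, E x y ↔ ∃ g : G, g • x = y)
    (H : ∀ (S : Finset G) (ε : ℝ), 0 < ε → ∃ F : X → X → Prop, IsFiniteBorelEquivalence F ∧
      (∀ x y, F x y → E x y) ∧ μ {x | ∃ s ∈ S, ¬ F x (s • x)} ≤ ENNReal.ofReal ε) :
    MuHyperfinite E μ := by
  classical
  obtain ⟨e, he⟩ := exists_surjective_nat G
  choose F hF hFE hFμ using fun n : ℕ =>
    H ((Finset.range (n + 1)).image e) ((1 / 2) ^ n) (by positivity)
  have hFm : ∀ (n : ℕ) (g : G), Measurable fun x => F n x (g • x) := by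
    intro n g
    have h1 : Measurable fun x : X => (x, g • x) := measurable_id.prodMk (hsm g)
    exact measurableSet_setOfPred.mp (h1 (hF n).2.1)
  set A : Set X := {x | ∀ g : G, ∀ᶠ n in atTop, F n x (g • x)} with hA
  have hAm : MeasurableSet A := by
    simp only [hA, eventually_atTop]
    refine measurableSet_setOfPred.mpr ?_
    refine Measurable.forall fun g => Measurable.exists fun n => Measurable.forall fun m => ?_
    exact Measurable.imp measurable_const (hFm m g)
  have hAμ : μ Aᶜ = 0 := by
    have hbc := measure_limsup_atTop_eq_zero (μ := μ)
      (s := fun n => {x | ∃ s ∈ (Finset.range (n + 1)).image e, ¬ F n x (s • x)}) (by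
        refine ne_top_of_le_ne_top ?_ (ENNReal.tsum_le_tsum hFμ)
        rw [← ENNReal.ofReal_tsum_of_nonneg (fun n => by positivity) summable_geometric_two]
        exact ENNReal.ofReal_ne_top)
    refine measure_mono_null ?_ hbc
    intro x hx
    rw [mem_limsup_iff_frequently_mem]
    simp only [hA, Set.mem_compl_iff, Set.mem_ofPred_eq, not_forall, not_eventually] at hx
    obtain ⟨g, hg⟩ := hx
    obtain ⟨m, rfl⟩ := he g
    refine (hg.and_eventually (eventually_ge_atTop m)).mono ?_
    rintro n ⟨h1, h2⟩
    exact ⟨e m, Finset.mem_image_of_mem _ (Finset.mem_range.mpr (by omega)), h1⟩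
  refine ⟨A, hAm, hAμ, fun i x y => ∀ n, i ≤ n → F n x y, fun i => ⟨?_, ?_, ?_⟩, ?_, ?_⟩
  · exact ⟨fun x n _ => (hF n).1.refl _, fun h n hn => (hF n).1.symm (h n hn),
      fun h h' n hn => (hF n).1.trans (h n hn) (h' n hn)⟩
  · have : {p : A × A | ∀ n, i ≤ n → F n p.1 p.2} =
      ⋂ n, ⋂ (_ : i ≤ n), (fun p : A × A => ((p.1 : X), (p.2 : X))) ⁻¹' {p | F n p.1 p.2} := by
      ext p; simp
    rw [this]
    refine MeasurableSet.iInter fun n => MeasurableSet.iInter fun _ => ?_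
    refine (Measurable.prodMk ?_ ?_) (hF n).2.1
    · exact measurable_subtype_coe.comp measurable_fst
    · exact measurable_subtype_coe.comp measurable_snd
  · intro x
    refine Set.Finite.subset (Set.Finite.preimage (Subtype.val_injective.injOn)
      ((hF i).2.2 x)) ?_
    intro y hy
    exact hy i le_rfl
  · intro i x y h n hn
    exact h n (by omega)
  · intro x y
    constructor
    · intro h
      obtain ⟨g, hg⟩ := (hE _ _).mp h
      obtain ⟨i, hi⟩ := eventually_atTop.mp (x.2 g)
      refine ⟨i, fun n hn => ?_⟩
      rw [← hg]; exact hi n hn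
    · rintro ⟨i, hi⟩
      exact hFE i _ _ (hi i le_rfl)

/-- Approximately invariant Borel selectors give hyperfiniteness almost everywhere. -/
lemma muHyperfinite_of_selectors {X : Type*} [MeasurableSpace X] (μ : Measure X)
    [IsProbabilityMeasure μ]
    {G : Type*} [Group G] [Countable G] [MulAction G X]
    (hsm : ∀ g : G, Measurable fun x : X => g • x)
    (hdiag : MeasurableSet {p : X × X | p.1 = p.2})
    (E : X → X → Prop) (hE : ∀ x y, E x y ↔ ∃ g : G, g • x = y)
    (e : ℕ → G)
    (H : ∀ (S : Finset G) (ε : ℝ), 0 < ε → ∃ ι : X → ℕ, Measurable ι ∧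
      μ.real {x | ∃ s ∈ S, e (ι x) • x ≠ e (ι (s • x)) • s • x} ≤ ε) :
    MuHyperfinite E μ := by
  refine muHyperfinite_of_approx μ hsm E hE fun S ε hε => ?_
  obtain ⟨ι, hι, hμ⟩ := H S (ε / 2) (by positivity)
  have hf : Measurable fun x => e (ι x) • x := by
    have : Measurable (fun q : ℕ × X => e q.1 • q.2) :=
      measurable_from_prod_countable_right fun n => hsm (e n)
    exact this.comp (hι.prodMk measurable_id)
  set Bad : Set X := {x | ∃ s ∈ S, e (ι x) • x ≠ e (ι (s • x)) • s • x} with hBad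
  obtain ⟨k, hk⟩ := exhaust_measure μ Set.univ
    (fun k => {x | ι x ≤ k ∧ ∀ s ∈ S, ι (s • x) ≤ k}) (by
      intro x _
      refine (eventually_ge_atTop (ι x)).and ?_
      exact (Finset.eventually_all S).mpr fun s _ => eventually_ge_atTop _)
    (a := ENNReal.ofReal (1 - ε / 2)) (by
      rw [measure_univ, ENNReal.ofReal_lt_one]; linarith)
  rw [Set.univ_inter] at hk
  set Kk : Set X := {x | ι x ≤ k ∧ ∀ s ∈ S, ι (s • x) ≤ k} with hKk
  have hKm : MeasurableSet Kk := by
    refine measurableSet_setOfPred.mpr (Measurable.and ?_ ?_)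
    · exact measurableSet_setOfPred.mp (measurableSet_le hι measurable_const)
    · refine Measurable.forall fun s => Measurable.imp measurable_const ?_
      exact measurableSet_setOfPred.mp (measurableSet_le (hι.comp (hsm s)) measurable_const)
  have hKc : μ.real Kkᶜ ≤ ε / 2 := by
    rw [probReal_compl_eq_one_sub hKm]
    have h2 : 1 - ε / 2 ≤ μ.real Kk := by
      have h1 := hk.le
      rw [ENNReal.ofReal_le_iff_le_toReal (measure_ne_top _ _)] at h1
      exact h1
    linarith
  refine ⟨fun x y => x = y ∨ (ι x ≤ k ∧ ι y ≤ k ∧ e (ι x) • x = e (ι y) • y),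
    ⟨⟨fun x => Or.inl rfl, ?_, ?_⟩, ?_, ?_⟩, ?_, ?_⟩
  · rintro x y (h | ⟨h1, h2, h3⟩)
    · exact Or.inl h.symm
    · exact Or.inr ⟨h2, h1, h3.symm⟩
  · rintro x y z (rfl | ⟨h1, h2, h3⟩) (rfl | ⟨h4, h5, h6⟩)
    · exact Or.inl rfl
    · exact Or.inr ⟨h4, h5, h6⟩
    · exact Or.inr ⟨h1, h2, h3⟩
    · exact Or.inr ⟨h1, h5, h3.trans h6⟩
  · refine measurableSet_setOfPred.mpr (Measurable.or (measurableSet_setOfPred.mp hdiag)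
      (Measurable.and ?_ (Measurable.and ?_ ?_)))
    · exact measurableSet_setOfPred.mp (measurableSet_le (hι.comp measurable_fst) measurable_const)
    · exact measurableSet_setOfPred.mp (measurableSet_le (hι.comp measurable_snd) measurable_const)
    · have : Measurable fun p : X × X => (e (ι p.1) • p.1, e (ι p.2) • p.2) :=
        (hf.comp measurable_fst).prodMk (hf.comp measurable_snd)
      exact measurableSet_setOfPred.mp (this hdiag)
  · intro x
    refine Set.Finite.subset (((Set.finite_Iic k).image
      (fun l => (e l)⁻¹ • e (ι x) • x)).insert x) ?_
    rintro y (rfl | ⟨h1, h2, h3⟩)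
    · exact Set.mem_insert _ _
    · refine Set.mem_insert_of_mem _ ⟨ι y, h2, ?_⟩
      simp [h3]
  · rintro x y (rfl | ⟨h1, h2, h3⟩)
    · exact (hE _ _).mpr ⟨1, one_smul _ _⟩
    · refine (hE _ _).mpr ⟨(e (ι y))⁻¹ * e (ι x), ?_⟩
      rw [mul_smul, h3, inv_smul_smul]
  · have hsub : {x | ∃ s ∈ S, ¬ (x = s • x ∨ (ι x ≤ k ∧ ι (s • x) ≤ k ∧
        e (ι x) • x = e (ι (s • x)) • s • x))} ⊆ Bad ∪ Kkᶜ := by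
      rintro x ⟨s, hs, h⟩
      by_cases hx : x ∈ Kk
      · left
        refine ⟨s, hs, fun heq => h (Or.inr ⟨hx.1, hx.2 s hs, heq⟩)⟩
      · right; exact hx
    refine (measure_mono hsub).trans ?_
    rw [ENNReal.le_ofReal_iff_toReal_le (measure_ne_top _ _) hε.le]
    calc μ.real (Bad ∪ Kkᶜ) ≤ μ.real Bad + μ.real Kkᶜ := measureReal_union_le _ _
      _ ≤ ε := by linarith

end CFW


section CFW2

lemma isProb_le_one {X : Type*} {p : X → ℝ} (h0 : ∀ y, 0 ≤ p y) (h1 : HasSum p 1) (y : X) :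
    p y ≤ 1 := by
  have := h1.summable.le_tsum y fun z _ => h0 z
  rwa [h1.tsum_eq] at this

lemma floor_approx {X : Type*} {p : X → ℝ} (h0 : ∀ y, 0 ≤ p y) (h1 : HasSum p 1)
    {δ : ℝ} (hδ : 0 < δ) :
    ∀ᶠ N : ℕ in atTop, ∑' y, (p y - (⌊p y * N⌋₊ : ℝ) / N) < δ := by
  have := tendsto_tsum_of_dominated_convergence (𝓕 := (atTop : Filter ℕ))
    (f := fun (N : ℕ) (y : X) => p y - (⌊p y * N⌋₊ : ℝ) / N) (g := fun _ => (0 : ℝ))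
    (bound := p) h1.summable (by
      intro y
      have h2 := (tendsto_nat_floor_mul_div_atTop (h0 y)).comp
        (tendsto_natCast_atTop_atTop (R := ℝ))
      have h3 := h2.const_sub (p y)
      rw [sub_self] at h3
      exact h3) (by
      refine Eventually.of_forall fun N y => ?_
      have h2 : (⌊p y * N⌋₊ : ℝ) / N ≤ p y := by
        refine div_le_of_le_mul₀ (Nat.cast_nonneg _) (h0 y) ?_
        exact Nat.floor_le (mul_nonneg (h0 y) (Nat.cast_nonneg _))
      have h3 : 0 ≤ (⌊p y * N⌋₊ : ℝ) / N := by positivity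
      rw [Real.norm_eq_abs, abs_of_nonneg (by linarith)]
      linarith)
  rw [tsum_zero] at this
  exact this.eventually_lt_const hδ

lemma floor_support_finite {X : Type*} {p : X → ℝ} (h1 : HasSum p 1) (N : ℕ) :
    {y | 0 < ⌊p y * N⌋₊}.Finite := by
  have h2 := (h1.summable.mul_right (N : ℝ)).tendsto_cofinite_zero
  have h3 := h2.eventually_lt_const one_pos
  rw [eventually_cofinite] at h3
  refine h3.subset ?_
  intro y hy
  have : 1 ≤ p y * N := Nat.floor_pos.mp hy
  simpa using this

/-- estimates between weights and their integer roundings -/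
lemma floor_sums {X : Type*} {p q : X → ℝ} (h0 : ∀ y, 0 ≤ p y) (h1 : HasSum p 1)
    (h0' : ∀ y, 0 ≤ q y) (h1' : HasSum q 1) {N : ℕ} (hN : 0 < N) {δ : ℝ}
    (hp : ∑' y, (p y - (⌊p y * N⌋₊ : ℝ) / N) < δ)
    (hq : ∑' y, (q y - (⌊q y * N⌋₊ : ℝ) / N) < δ)
    (hpq : l1dist p q < δ) (Y : Finset X) (hY : ∀ y, 0 < ⌊p y * N⌋₊ → y ∈ Y) :
    N * (1 - δ) ≤ ∑ y ∈ Y, (⌊p y * N⌋₊ : ℝ) ∧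
    ∑ y ∈ Y, |(⌊p y * N⌋₊ : ℝ) - ⌊q y * N⌋₊| ≤ N * (3 * δ) := by
  have hN' : (0 : ℝ) < N := by exact_mod_cast hN
  have key : ∀ {r : X → ℝ}, (∀ y, 0 ≤ r y) → ∀ y, 0 ≤ r y - (⌊r y * N⌋₊ : ℝ) / N := by
    intro r hr y
    have : (⌊r y * N⌋₊ : ℝ) / N ≤ r y := by
      rw [div_le_iff₀ hN']
      exact Nat.floor_le (mul_nonneg (hr y) hN'.le)
    linarith
  have keys : ∀ {r : X → ℝ}, (∀ y, 0 ≤ r y) → HasSum r 1 →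
      Summable fun y => r y - (⌊r y * N⌋₊ : ℝ) / N := by
    intro r hr hr1
    refine Summable.of_nonneg_of_le (key hr) (fun y => ?_) hr1.summable
    have : 0 ≤ (⌊r y * N⌋₊ : ℝ) / N := by positivity
    linarith
  constructor
  · have hs : HasSum (fun y => (⌊p y * N⌋₊ : ℝ) / N) (∑ y ∈ Y, (⌊p y * N⌋₊ : ℝ) / N) := by
      refine hasSum_sum_of_ne_finset_zero fun y hy => ?_
      have : ⌊p y * N⌋₊ = 0 := by
        by_contra h
        exact hy (hY y (Nat.pos_of_ne_zero h))
      rw [this]; simp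
    have h2 := (h1.sub hs).tsum_eq
    rw [h2, ← Finset.sum_div] at hp
    have h3 : 1 - δ < (∑ y ∈ Y, (⌊p y * N⌋₊ : ℝ)) / N := by linarith
    rw [lt_div_iff₀ hN'] at h3
    linarith
  · have hsabs : Summable fun y => |p y - q y| := by
      refine Summable.of_nonneg_of_le (fun y => abs_nonneg _) (fun y => ?_)
        (h1.summable.add h1'.summable)
      rw [abs_le]; constructor <;> linarith [h0 y, h0' y]
    have hb : ∀ y, |(⌊p y * N⌋₊ : ℝ) - ⌊q y * N⌋₊| ≤
        N * (|p y - q y| + (p y - (⌊p y * N⌋₊ : ℝ) / N) + (q y - (⌊q y * N⌋₊ : ℝ) / N)) := by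
      intro y
      have e1 : (⌊p y * N⌋₊ : ℝ) - ⌊q y * N⌋₊ =
        N * ((⌊p y * N⌋₊ : ℝ) / N - (⌊q y * N⌋₊ : ℝ) / N) := by field_simp
      rw [e1, abs_mul, abs_of_pos hN']
      refine mul_le_mul_of_nonneg_left ?_ hN'.le
      have a1 := key h0 y
      have a2 := key h0' y
      have a3 := abs_le.mp (le_refl |p y - q y|)
      rw [abs_le]
      constructor <;> linarith [a3.1, a3.2]
    refine (Finset.sum_le_sum fun y _ => hb y).trans ?_
    rw [← Finset.mul_sum]
    refine mul_le_mul_of_nonneg_left ?_ hN'.le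
    rw [Finset.sum_add_distrib, Finset.sum_add_distrib]
    have b1 := hsabs.sum_le_tsum Y fun y _ => abs_nonneg _
    have b2 := (keys h0 h1).sum_le_tsum Y fun y _ => key h0 y
    have b3 := (keys h0' h1').sum_le_tsum Y fun y _ => key h0' y
    unfold l1dist at hpq
    linarith

set_option maxHeartbeats 1000000 in
open Classical in
/-- Borel 2-amenability yields approximately invariant Borel selectors. -/
lemma exists_selector {X : Type*} [MeasurableSpace X] (μ : Measure X)
    [IsProbabilityMeasure μ]
    {G : Type*} [Group G] [Countable G] [MulAction G X]
    (hsm : ∀ g : G, Measurable fun x : X => g • x)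
    (A : ℕ → Set X) (hA : ∀ i, MeasurableSet (A i))
    (hsep : ∀ x y, x ≠ y → ∃ i, ¬ (x ∈ A i ↔ y ∈ A i))
    (hdiag : MeasurableSet {p : X × X | p.1 = p.2})
    (E : X → X → Prop) (hE : ∀ x y, E x y ↔ ∃ g : G, g • x = y)
    (e : ℕ → G) (he : Surjective e) (ham : Borel2Amenable E) (S : Finset G) (ε : ℝ)
    (hε : 0 < ε) : ∃ ι : X → ℕ, Measurable ι ∧
      μ.real {x | ∃ s ∈ S, e (ι x) • x ≠ e (ι (s • x)) • s • x} ≤ ε := by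
  obtain ⟨P, hprob, hmeas, hinv⟩ := ham
  obtain ⟨δ, hδ, hδ2, hδε⟩ : ∃ δ : ℝ, 0 < δ ∧ δ ≤ 1 / 2 ∧ S.card * (6 * δ) ≤ ε / 2 := by
    refine ⟨min (1 / 2) (ε / (12 * (S.card + 1))), by positivity, min_le_left _ _, ?_⟩
    have h1 : min (1 / 2) (ε / (12 * (S.card + 1))) ≤ ε / (12 * ((S.card : ℝ) + 1)) :=
      min_le_right _ _
    calc (S.card : ℝ) * (6 * min (1 / 2) (ε / (12 * (S.card + 1))))
        ≤ ((S.card : ℝ) + 1) * (6 * (ε / (12 * ((S.card : ℝ) + 1)))) := by gcongr; linarith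
      _ = ε / 2 := by field_simp; norm_num
  have hcl : ∀ (s : G) x, E x (s • x) := fun s x => (hE _ _).mpr ⟨s, rfl⟩
  have ha : ENNReal.ofReal (1 - ε / 2) < μ Set.univ := by
    rw [measure_univ, ENNReal.ofReal_lt_one]; linarith
  obtain ⟨i, hi⟩ := exhaust_measure μ Set.univ
    (fun i => {x | ∀ᶠ j in atTop, ∀ s ∈ S, l1dist (P i j x) (P i j (s • x)) < δ}) (by
      intro x _
      have : ∀ᶠ i in atTop, ∀ s ∈ S, ∀ᶠ j in atTop, l1dist (P i j x) (P i j (s • x)) < δ :=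
        (Finset.eventually_all S).mpr fun s _ => hinv x _ (hcl s x) δ hδ
      exact this.mono fun i h => (Finset.eventually_all S).mpr h) ha
  rw [Set.univ_inter] at hi
  obtain ⟨j, hj⟩ := exhaust_measure μ _
    (fun j => {x | ∀ s ∈ S, l1dist (P i j x) (P i j (s • x)) < δ}) (fun x hx => hx) hi
  set p : X → X → ℝ := P i j with hpdef
  have hp0 : ∀ x y, 0 ≤ p x y := fun x => (hprob i j x).1
  have hp1 : ∀ x, HasSum (p x) 1 := fun x => (hprob i j x).2.2
  have hpE : ∀ x y, p x y ≠ 0 → E x y := fun x => (hprob i j x).2.1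
  have hpm : Measurable fun q : X × X => p q.1 q.2 := hmeas i j
  obtain ⟨N, hN⟩ := exhaust_measure μ _
    (fun N : ℕ => {x | 0 < N ∧ ∀ s ∈ insert 1 S,
      ∑' y, (p (s • x) y - (⌊p (s • x) y * N⌋₊ : ℝ) / N) < δ}) (by
      intro x _
      refine (eventually_gt_atTop 0).and ?_
      exact (Finset.eventually_all _).mpr fun s _ => floor_approx (hp0 _) (hp1 _) hδ) hj
  set w : X → X → ℕ := fun x y => ⌊p x y * N⌋₊ with hw
  obtain ⟨m, hm⟩ := exhaust_measure μ _
    (fun m : ℕ => {x | Set.InjOn (fun y (l : Fin m) => decide (y ∈ A l))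
      (⋃ s ∈ insert 1 S, {y | 0 < w (s • x) y})}) (by
      intro x _
      have hfin : (⋃ s ∈ insert 1 S, {y | 0 < w (s • x) y}).Finite :=
        Set.Finite.biUnion (Finset.finite_toSet _) fun s _ => floor_support_finite (hp1 _) N
      have h1 : ∀ᶠ m : ℕ in atTop, ∀ y ∈ (⋃ s ∈ insert 1 S, {y | 0 < w (s • x) y}),
          ∀ y' ∈ (⋃ s ∈ insert 1 S, {y | 0 < w (s • x) y}),
          (fun (l : Fin m) => decide (y ∈ A l)) = (fun (l : Fin m) => decide (y' ∈ A l)) →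
          y = y' := by
        refine (eventually_all_finite hfin).mpr fun y _ =>
          (eventually_all_finite hfin).mpr fun y' _ => ?_
        by_cases hyy : y = y'
        · exact Eventually.of_forall fun _ _ => hyy
        · obtain ⟨l, hl⟩ := hsep y y' hyy
          refine (eventually_gt_atTop l).mono fun m hml heq => ?_
          have := congrFun heq ⟨l, hml⟩
          simp only [decide_eq_decide] at this
          exact absurd this hl
      exact h1.mono fun m h y hy y' hy' heq => h y hy y' hy' heq) hN
  set c : X → (Fin m → Bool) := fun y l => decide (y ∈ A l) with hc
  have hwm : ∀ n, Measurable fun x => w x (e n • x) := by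
    intro n
    have h1 : Measurable fun x : X => p x (e n • x) :=
      hpm.comp (measurable_id.prodMk (hsm (e n)))
    exact Nat.measurable_floor.comp (h1.mul_const _)
  have hcm : ∀ n (d : Fin m → Bool), Measurable fun x => c (e n • x) = d := by
    intro n d
    have : (fun x => c (e n • x) = d) = fun x => ∀ l : Fin m, (e n • x ∈ A l ↔ d l = true) := by
      funext x
      simp only [hc, funext_iff, eq_iff_iff]
      refine forall_congr' fun l => ?_
      by_cases h : e n • x ∈ A l <;> cases d l <;> simp [h]
    rw [this]
    refine Measurable.forall fun l => Measurable.iff ?_ measurable_const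
    exact measurableSet_setOfPred.mp ((hsm (e n)) (hA l))
  let _ : LinearOrder ((Fin m → Bool) × Fin N) :=
    LinearOrder.lift' (Fintype.equivFin ((Fin m → Bool) × Fin N)) (Equiv.injective _)
  -- the index `n` represents the item `z` for `x`
  set Rp : X → ℕ → (Fin m → Bool) × Fin N → Prop :=
    fun x n z => c (e n • x) = z.1 ∧ (z.2 : ℕ) < w x (e n • x) with hRp
  have hRpm : ∀ n z, Measurable fun x => Rp x n z := by
    intro n z
    refine (hcm n z.1).and ?_
    exact measurableSet_setOfPred.mp (measurableSet_lt measurable_const (hwm n))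
  set B : X → Finset ((Fin m → Bool) × Fin N) :=
    fun x => Finset.univ.filter fun z => ∃ n, Rp x n z with hB
  have hBmem : ∀ x z, z ∈ B x ↔ ∃ n, Rp x n z := by intro x z; simp [hB]
  have hBm : ∀ z, Measurable fun x => z ∈ B x := by
    intro z
    simp only [hBmem]
    exact Measurable.exists fun n => hRpm n z
  have hMinm : ∀ (π : Equiv.Perm ((Fin m → Bool) × Fin N)) z,
      Measurable fun x => IsPiMin π (B x) z := by
    intro π z
    refine (hBm z).and (Measurable.forall fun z' => (hBm z').imp measurable_const)
  set sel : Equiv.Perm ((Fin m → Bool) × Fin N) → X → ℕ → Prop :=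
    fun π x n => (∃ z, IsPiMin π (B x) z ∧ Rp x n z) ∨ ∀ z, z ∉ B x with hsel
  have hselm : ∀ π n, MeasurableSet {x | sel π x n} := by
    intro π n
    refine measurableSet_setOfPred.mpr (Measurable.or ?_ ?_)
    · exact Measurable.exists fun z => (hMinm π z).and (hRpm n z)
    · exact Measurable.forall fun z => (hBm z).not
  have hselex : ∀ π x, ∃ n, sel π x n := by
    intro π x
    by_cases h : (B x).Nonempty
    · obtain ⟨z, hz⟩ := IsPiMin.exists π h
      obtain ⟨n, hn⟩ := (hBmem x z).mp hz.1
      exact ⟨n, Or.inl ⟨z, hz, hn⟩⟩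
    · refine ⟨0, Or.inr fun z hz => h ⟨z, hz⟩⟩
  set ι : Equiv.Perm ((Fin m → Bool) × Fin N) → X → ℕ := fun π x => Nat.find (hselex π x) with hι
  have hιm : ∀ π, Measurable (ι π) := fun π => measurable_find (hselex π) (hselm π)
  have hιs : ∀ π x, sel π x (ι π x) := fun π x => Nat.find_spec (hselex π x)
  have hιsel : ∀ π x z, IsPiMin π (B x) z → Rp x (ι π x) z := by
    intro π x z hz
    rcases hιs π x with ⟨z', hz', h⟩ | h
    · rwa [hz.unique hz']
    · exact absurd hz.1 (h z)
  have hfm : ∀ π, Measurable fun x => e (ι π x) • x := by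
    intro π
    have : Measurable (fun q : ℕ × X => e q.1 • q.2) :=
      measurable_from_prod_countable_right fun n => hsm (e n)
    exact this.comp ((hιm π).prodMk measurable_id)
  have hfin := exists_avg_measure μ
    (Q := fun π => {x | ∃ s ∈ S, e (ι π x) • x ≠ e (ι π (s • x)) • s • x}) (by
      intro π
      refine measurableSet_setOfPred.mpr (Measurable.exists fun s => measurable_const.and ?_)
      have h1 : Measurable fun x => (e (ι π x) • x, e (ι π (s • x)) • s • x) :=
        (hfm π).prodMk ((hfm π).comp (hsm s))
      exact (measurableSet_setOfPred.mp (h1 hdiag)).not) _ (S.card * (6 * δ)) (by positivity) ?_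
      (ε / 2) hm
  · obtain ⟨π, hπ⟩ := hfin
    exact ⟨ι π, hιm π, hπ.trans (by linarith)⟩
  rintro x ⟨⟨⟨-, hx1⟩, hNpos, hx2⟩, hx3⟩
  have hN' : (0 : ℝ) < N := by exact_mod_cast hNpos
  have hfinY : (⋃ s ∈ insert 1 S, {y | 0 < w (s • x) y}).Finite :=
    Set.Finite.biUnion (Finset.finite_toSet _) fun s _ => floor_support_finite (hp1 _) N
  set Y : Finset X := hfinY.toFinset with hY
  have hYmem : ∀ s ∈ insert 1 S, ∀ y, 0 < w (s • x) y → y ∈ Y := by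
    intro s hs y hy
    rw [hY, Set.Finite.mem_toFinset]
    exact Set.mem_biUnion hs hy
  have hYmem1 : ∀ y, 0 < w x y → y ∈ Y := by
    intro y hy
    refine hYmem 1 (Finset.mem_insert_self _ _) y ?_
    rwa [one_smul]
  have hcinj : Set.InjOn c Y := by
    rw [hY, Set.Finite.coe_toFinset]; exact hx3
  have hBchar : ∀ s ∈ insert 1 S, ∀ z, z ∈ B (s • x) ↔
      ∃ y ∈ Y, c y = z.1 ∧ (z.2 : ℕ) < w (s • x) y := by
    intro s hs z
    rw [hBmem]
    constructor
    · rintro ⟨n, h1, h2⟩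
      exact ⟨_, hYmem s hs _ (lt_of_le_of_lt (Nat.zero_le _) h2), h1, h2⟩
    · rintro ⟨y, hy, h1, h2⟩
      have hne : p (s • x) y ≠ 0 := by
        intro h0
        simp [hw, h0] at h2
      obtain ⟨g, hg⟩ := (hE _ _).mp (hpE _ _ hne)
      obtain ⟨n, rfl⟩ := he g
      refine ⟨n, ?_⟩
      simp only [hRp, hg]
      exact ⟨h1, h2⟩
  have hwle : ∀ x y, w x y ≤ N := by
    intro x y
    refine Nat.floor_le_of_le ?_
    have := isProb_le_one (hp0 x) (hp1 x) y
    nlinarith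
  -- per-element estimate
  have hper : ∀ s ∈ S, ∀ F : Finset (Equiv.Perm ((Fin m → Bool) × Fin N)),
      (∀ π ∈ F, ¬ ∃ z, IsPiMin π (B x) z ∧ IsPiMin π (B (s • x)) z) → (F.card : ℝ) ≤
      6 * δ * Nat.card (Equiv.Perm ((Fin m → Bool) × Fin N)) := by
    intro s hs F hF
    have hs' : s ∈ insert 1 S := Finset.mem_insert_of_mem hs
    have hB1 : ∀ z, z ∈ B x ↔ ∃ y ∈ Y, c y = z.1 ∧ (z.2 : ℕ) < w x y := by
      intro z
      have := hBchar 1 (Finset.mem_insert_self _ _) z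
      rwa [one_smul] at this
    have hx21 := hx2 1 (Finset.mem_insert_self _ _)
    rw [one_smul] at hx21
    obtain ⟨hf1, hf2⟩ := floor_sums (hp0 x) (hp1 x) (hp0 (s • x)) (hp1 (s • x)) hNpos
      hx21 (hx2 s hs') (hx1 s hs) Y hYmem1
    have hbad' := minhash_levels_gen Y c hcinj (w x) (w (s • x)) (fun y _ => hwle _ _)
      (fun y _ => hwle _ _) (B x) (B (s • x)) hB1 (hBchar s hs')
      (lt_of_lt_of_le (by nlinarith) hf1) F hF
    set b : ℝ := (F.card : ℝ) with hbdef
    set Kc : ℝ := (Nat.card (Equiv.Perm ((Fin m → Bool) × Fin N)) : ℝ) with hKc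
    have hb0 : 0 ≤ b := Nat.cast_nonneg _
    have hK0 : 0 ≤ Kc := Nat.cast_nonneg _
    have h4 : b * (N * (1 / 2)) ≤ N * (3 * δ) * Kc := by
      calc b * (N * (1 / 2)) ≤ b * ∑ y ∈ Y, (w x y : ℝ) := by
            refine mul_le_mul_of_nonneg_left (le_trans ?_ hf1) hb0
            nlinarith
        _ ≤ _ := hbad'
        _ ≤ N * (3 * δ) * Kc := mul_le_mul_of_nonneg_right hf2 hK0
    have h5 : N * (b * (1 / 2)) ≤ N * (3 * δ * Kc) := by linarith
    have h6 := le_of_mul_le_mul_left h5 hN'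
    linarith
  have hgen : ∀ F : Finset (Equiv.Perm ((Fin m → Bool) × Fin N)),
      (∀ π ∈ F, ∃ s ∈ S, e (ι π x) • x ≠ e (ι π (s • x)) • s • x) →
      (F.card : ℝ) ≤ S.card * (6 * δ) * Nat.card (Equiv.Perm ((Fin m → Bool) × Fin N)) := by
    intro F hF
    have hsub : F ⊆ S.biUnion fun s =>
        Finset.univ.filter fun π : Equiv.Perm ((Fin m → Bool) × Fin N) =>
        ¬ ∃ z, IsPiMin π (B x) z ∧ IsPiMin π (B (s • x)) z := by
      intro π hπ
      obtain ⟨s, hs, hne⟩ := hF π hπ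
      simp only [Finset.mem_biUnion, Finset.mem_filter, Finset.mem_univ, true_and]
      refine ⟨s, hs, ?_⟩
      rintro ⟨z, hz1, hz2⟩
      obtain ⟨a1, a2⟩ := hιsel π x z hz1
      obtain ⟨b1, b2⟩ := hιsel π (s • x) z hz2
      refine hne (hcinj ?_ ?_ (a1.trans b1.symm))
      · exact hYmem1 _ (lt_of_le_of_lt (Nat.zero_le _) a2)
      · exact hYmem s (Finset.mem_insert_of_mem hs) _ (lt_of_le_of_lt (Nat.zero_le _) b2)
    refine (Nat.cast_le.mpr ((Finset.card_le_card hsub).trans Finset.card_biUnion_le)).trans ?_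
    push_cast
    refine (Finset.sum_le_sum fun s hs => hper s hs _ fun π hπ =>
      (Finset.mem_filter.mp hπ).2).trans ?_
    rw [Finset.sum_const, nsmul_eq_mul]
    linarith
  rw [Fintype.card_eq_nat_card]
  refine hgen _ fun π hπ => ?_
  simp only [Finset.mem_filter, Finset.mem_univ, true_and] at hπ
  exact hπ

/-- Borel 2-amenable orbit equivalence relations are measure-hyperfinite. -/
theorem measureHyperfinite_of_borel2Amenable {X : Type*} [MeasurableSpace X]
    {G : Type*} [Group G] [Countable G] [MulAction G X]
    (hsm : ∀ g : G, Measurable fun x : X => g • x)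
    (A : ℕ → Set X) (hA : ∀ i, MeasurableSet (A i))
    (hsep : ∀ x y, x ≠ y → ∃ i, ¬ (x ∈ A i ↔ y ∈ A i))
    (E : X → X → Prop) (hE : ∀ x y, E x y ↔ ∃ g : G, g • x = y)
    (ham : Borel2Amenable E) : MeasureHyperfinite E := by
  intro μ hμ
  have hdiag : MeasurableSet {p : X × X | p.1 = p.2} := by
    have : {p : X × X | p.1 = p.2} = {p : X × X | ∀ i, (p.1 ∈ A i ↔ p.2 ∈ A i)} := by
      ext ⟨x, y⟩
      constructor
      · intro (h : x = y) i
        subst h; exact Iff.rfl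
      · intro h
        by_contra hne
        obtain ⟨i, hi⟩ := hsep x y hne
        exact hi (h i)
    rw [this]
    refine measurableSet_setOfPred.mpr (Measurable.forall fun i => Measurable.iff ?_ ?_)
    · exact measurableSet_setOfPred.mp (measurable_fst (hA i))
    · exact measurableSet_setOfPred.mp (measurable_snd (hA i))
  obtain ⟨e, he⟩ := exists_surjective_nat G
  exact muHyperfinite_of_selectors μ hsm hdiag E hE e fun S ε hε =>
    exists_selector μ hsm A hA hsep hdiag E hE e he ham S ε hε

end CFW2



/-! ### A Borel section of the boundary map -/

section TreeSection

variable {V : Type*} {T : SimpleGraph V}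

lemma tree_par_unique (hT : T.IsTree) (r : V) {u w v : V} (hu : T.Adj u v) (hw : T.Adj w v)
    (hdu : T.dist r v = T.dist r u + 1) (hdw : T.dist r v = T.dist r w + 1) : u = w := by
  obtain ⟨p, hp⟩ := hT.connected.exists_walk_length_eq_dist r u
  obtain ⟨q, hq⟩ := hT.connected.exists_walk_length_eq_dist r w
  have h1 : (p.concat hu).IsPath := by
    refine SimpleGraph.Walk.isPath_of_length_eq_dist _ ?_
    rw [SimpleGraph.Walk.length_concat, hp, hdu]
  have h2 : (q.concat hw).IsPath := by
    refine SimpleGraph.Walk.isPath_of_length_eq_dist _ ?_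
    rw [SimpleGraph.Walk.length_concat, hq, hdw]
  have h3 : p.concat hu = q.concat hw :=
    congrArg Subtype.val (hT.isAcyclic.path_unique ⟨_, h1⟩ ⟨_, h2⟩)
  have h4 := congrArg SimpleGraph.Walk.penultimate h3
  simpa using h4

lemma tree_par_exists (hT : T.IsTree) (r : V) {v : V} (hv : 0 < T.dist r v) :
    ∃ u, T.Adj u v ∧ T.dist r v = T.dist r u + 1 := by
  obtain ⟨p, hp⟩ := hT.connected.exists_walk_length_eq_dist r v
  have hnil : ¬ p.Nil := by
    intro h
    have := SimpleGraph.Walk.nil_iff_length_eq.mp h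
    omega
  refine ⟨p.penultimate, p.adj_penultimate hnil, ?_⟩
  have h1 := SimpleGraph.dist_le p.dropLast
  have h2 : p.dropLast.length = p.length - 1 := by simp
  rcases hT.dist_eq_dist_add_one_of_adj r (p.adj_penultimate hnil) with h | h
  · omega
  · exact h

open Classical in
/-- The parent of a vertex, with respect to the root `r`. -/
noncomputable def treePar (T : SimpleGraph V) (r v : V) : V :=
  if h : ∃ u, T.Adj u v ∧ T.dist r v = T.dist r u + 1 then h.choose else v

lemma treePar_eq (hT : T.IsTree) (r : V) {u v : V} (hu : T.Adj u v)
    (hdu : T.dist r v = T.dist r u + 1) : treePar T r v = u := by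
  have h : ∃ u, T.Adj u v ∧ T.dist r v = T.dist r u + 1 := ⟨u, hu, hdu⟩
  rw [treePar, dif_pos h]
  exact tree_par_unique hT r h.choose_spec.1 hu h.choose_spec.2 hdu

lemma treePar_spec (hT : T.IsTree) (r : V) {v : V} (hv : 0 < T.dist r v) :
    T.Adj (treePar T r v) v ∧ T.dist r v = T.dist r (treePar T r v) + 1 := by
  have h := tree_par_exists hT r hv
  rw [treePar, dif_pos h]
  exact h.choose_spec

/-- The ancestor at level `k`. -/
noncomputable def treeAnc (T : SimpleGraph V) (r : V) (k : ℕ) (v : V) : V :=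
  (treePar T r)^[T.dist r v - k] v

lemma dist_iterate_par (hT : T.IsTree) (r : V) (m : ℕ) {v : V} (hm : m ≤ T.dist r v) :
    T.dist r ((treePar T r)^[m] v) = T.dist r v - m := by
  induction m with
  | zero => simp
  | succ m ih =>
    have h1 := ih (by omega)
    rw [Function.iterate_succ_apply']
    have h2 := (treePar_spec hT r (v := (treePar T r)^[m] v) (by omega)).2
    omega

lemma dist_treeAnc (hT : T.IsTree) (r : V) {k : ℕ} {v : V} (hk : k ≤ T.dist r v) :
    T.dist r (treeAnc T r k v) = k := by
  rw [treeAnc, dist_iterate_par hT r _ (by omega)]; omega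

lemma adj_treeAnc (hT : T.IsTree) (r : V) {k : ℕ} {v : V} (hk : k + 1 ≤ T.dist r v) :
    T.Adj (treeAnc T r k v) (treeAnc T r (k + 1) v) := by
  have h1 : treeAnc T r k v = treePar T r (treeAnc T r (k + 1) v) := by
    rw [treeAnc, treeAnc, ← Function.iterate_succ_apply' (treePar T r)]
    congr 1
    omega
  rw [h1]
  refine (treePar_spec hT r ?_).1
  rw [dist_treeAnc hT r hk]; omega

lemma geo_eventually_up (hT : T.IsTree) (r : V) (v : Geo T) :
    ∃ n0, ∀ n ≥ n0, T.dist r (v.1 (n + 1)) = T.dist r (v.1 n) + 1 := by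
  obtain ⟨n0, h0⟩ : ∃ n0, T.dist r (v.1 (n0 + 1)) = T.dist r (v.1 n0) + 1 := by
    by_contra hcon
    push Not at hcon
    have hdown : ∀ n, T.dist r (v.1 n) + n = T.dist r (v.1 0) := by
      intro n
      induction n with
      | zero => simp
      | succ n ih =>
        rcases hT.dist_eq_dist_add_one_of_adj r (v.2.2 n) with h | h
        · omega
        · exact absurd h (hcon n)
    have := hdown (T.dist r (v.1 0) + 1)
    omega
  refine ⟨n0, fun n hn => ?_⟩
  induction n, hn using Nat.le_induction with
  | base => exact h0
  | succ n hn ih =>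
    rcases hT.dist_eq_dist_add_one_of_adj r (v.2.2 (n + 1)) with h | h
    · have := tree_par_unique hT r (v.2.2 n) (v.2.2 (n + 1)).symm ih h
      have := v.2.1 this
      omega
    · exact h

lemma treeAnc_succ (hT : T.IsTree) (r : V) {k : ℕ} {u v : V} (huv : T.Adj u v)
    (h : T.dist r v = T.dist r u + 1) (hk : k ≤ T.dist r u) :
    treeAnc T r k v = treeAnc T r k u := by
  have h1 : T.dist r v - k = (T.dist r u - k) + 1 := by omega
  rw [treeAnc, h1, Function.iterate_succ_apply, treePar_eq hT r huv h]
  rfl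

lemma geo_anc_stable (hT : T.IsTree) (r : V) (v : Geo T) {n0 : ℕ}
    (h0 : ∀ n ≥ n0, T.dist r (v.1 (n + 1)) = T.dist r (v.1 n) + 1) {k m : ℕ} (hm : n0 ≤ m)
    (hk : k ≤ T.dist r (v.1 m)) {n : ℕ} (hn : m ≤ n) :
    k ≤ T.dist r (v.1 n) ∧ treeAnc T r k (v.1 n) = treeAnc T r k (v.1 m) := by
  induction n, hn using Nat.le_induction with
  | base => exact ⟨hk, rfl⟩
  | succ n hn ih =>
    have := h0 n (hm.trans hn)
    refine ⟨by omega, ?_⟩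
    rw [treeAnc_succ hT r (v.2.2 n) this ih.1, ih.2]

/-- `w` is the vertex at level `k` on the ray from the root towards the end of `v`. -/
def RayAt (T : SimpleGraph V) (r : V) (v : ℕ → V) (k : ℕ) (w : V) : Prop :=
  ∃ N, ∀ n ≥ N, treeAnc T r k (v n) = w ∧ k ≤ T.dist r (v n)

lemma RayAt.unique {r : V} {v : ℕ → V} {k : ℕ} {w w' : V} (h : RayAt T r v k w)
    (h' : RayAt T r v k w') : w = w' := by
  obtain ⟨N, hN⟩ := h
  obtain ⟨N', hN'⟩ := h'
  rw [← (hN (max N N') (le_max_left _ _)).1, (hN' (max N N') (le_max_right _ _)).1]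

lemma rayAt_of_up (hT : T.IsTree) (r : V) (v : Geo T) {n0 : ℕ}
    (h0 : ∀ n ≥ n0, T.dist r (v.1 (n + 1)) = T.dist r (v.1 n) + 1) {m : ℕ} (hm : n0 ≤ m) :
    RayAt T r v.1 (T.dist r (v.1 m)) (v.1 m) := by
  refine ⟨m, fun n hn => ?_⟩
  obtain ⟨h1, h2⟩ := geo_anc_stable hT r v h0 hm le_rfl hn
  refine ⟨?_, h1⟩
  rw [h2]
  simp [treeAnc]

lemma geo_dist_up (r : V) (v : Geo T) {n0 : ℕ}
    (h0 : ∀ n ≥ n0, T.dist r (v.1 (n + 1)) = T.dist r (v.1 n) + 1) (j : ℕ) :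
    T.dist r (v.1 (n0 + j)) = T.dist r (v.1 n0) + j := by
  induction j with
  | zero => simp
  | succ j ih =>
    have := h0 (n0 + j) (by omega)
    rw [← add_assoc, this, ih]; omega

lemma rayAt_exists (hT : T.IsTree) (r : V) (v : Geo T) (k : ℕ) : ∃ w, RayAt T r v.1 k w := by
  obtain ⟨n0, h0⟩ := geo_eventually_up hT r v
  have h1 := geo_dist_up r v h0 k
  refine ⟨treeAnc T r k (v.1 (n0 + k)), n0 + k, fun n hn => ?_⟩
  obtain ⟨h2, h3⟩ := geo_anc_stable hT r v h0 (m := n0 + k) (k := k) (by omega) (by omega) hn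
  exact ⟨h3, h2⟩

/-- The ray from the root to the end of `v`. -/
noncomputable def rayFun (hT : T.IsTree) (r : V) (v : Geo T) (k : ℕ) : V :=
  (rayAt_exists hT r v k).choose

lemma rayFun_spec (hT : T.IsTree) (r : V) (v : Geo T) (k : ℕ) :
    RayAt T r v.1 k (rayFun hT r v k) := (rayAt_exists hT r v k).choose_spec

lemma rayFun_eq_iff (hT : T.IsTree) (r : V) (v : Geo T) (k : ℕ) (w : V) :
    rayFun hT r v k = w ↔ RayAt T r v.1 k w :=
  ⟨fun h => h ▸ rayFun_spec hT r v k, fun h => (rayFun_spec hT r v k).unique h⟩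

lemma dist_rayFun (hT : T.IsTree) (r : V) (v : Geo T) (k : ℕ) :
    T.dist r (rayFun hT r v k) = k := by
  obtain ⟨N, hN⟩ := rayFun_spec hT r v k
  obtain ⟨h1, h2⟩ := hN N le_rfl
  rw [← h1, dist_treeAnc hT r h2]

/-- The ray from the root as a geodesic. -/
noncomputable def rayGeo (hT : T.IsTree) (r : V) (v : Geo T) : Geo T :=
  ⟨rayFun hT r v, by
    intro a b hab
    rw [← dist_rayFun hT r v a, hab, dist_rayFun], by
    intro k
    obtain ⟨N, hN⟩ := rayFun_spec hT r v k
    obtain ⟨N', hN'⟩ := rayFun_spec hT r v (k + 1)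
    obtain ⟨h1, h2⟩ := hN (max N N') (le_max_left _ _)
    obtain ⟨h3, h4⟩ := hN' (max N N') (le_max_right _ _)
    rw [← h1, ← h3]
    exact adj_treeAnc hT r h4⟩

lemma iterate_geoShift_apply (v : Geo T) (m n : ℕ) :
    ((geoShift T)^[m] v).1 n = v.1 (n + m) := by
  induction m generalizing v with
  | zero => rfl
  | succ m ih =>
    rw [Function.iterate_succ_apply, ih]
    change v.1 (n + m + 1) = _
    rfl

lemma rayGeo_shift (hT : T.IsTree) (r : V) (v : Geo T) :
    rayGeo hT r (geoShift T v) = rayGeo hT r v := by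
  apply Subtype.ext
  funext k
  change rayFun hT r _ k = rayFun hT r v k
  rw [rayFun_eq_iff]
  obtain ⟨N, hN⟩ := rayFun_spec hT r v k
  exact ⟨N, fun n hn => hN (n + 1) (by omega)⟩

lemma rayGeo_shift_iterate (hT : T.IsTree) (r : V) (v : Geo T) (m : ℕ) :
    rayGeo hT r ((geoShift T)^[m] v) = rayGeo hT r v := by
  induction m generalizing v with
  | zero => rfl
  | succ m ih => rw [Function.iterate_succ_apply, ih, rayGeo_shift]

lemma rayGeo_tail (hT : T.IsTree) (r : V) {v w : Geo T} (h : tailRel T v w) :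
    rayGeo hT r v = rayGeo hT r w := by
  induction h with
  | rel a b hab =>
    obtain ⟨m, rfl⟩ := hab
    rw [rayGeo_shift_iterate]
  | refl a => rfl
  | symm a b _ ih => exact ih.symm
  | trans a b c _ _ ih1 ih2 => exact ih1.trans ih2

lemma rayGeo_meets (hT : T.IsTree) (r : V) (v : Geo T) :
    ∃ a b, (geoShift T)^[a] v = (geoShift T)^[b] (rayGeo hT r v) := by
  obtain ⟨n0, h0⟩ := geo_eventually_up hT r v
  refine ⟨n0, T.dist r (v.1 n0), Subtype.ext (funext fun n => ?_)⟩
  rw [iterate_geoShift_apply, iterate_geoShift_apply]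
  symm
  change rayFun hT r v _ = _
  rw [rayFun_eq_iff]
  have h1 := geo_dist_up r v h0 n
  have h2 := rayAt_of_up hT r v h0 (m := n0 + n) (by omega)
  rwa [h1, add_comm, add_comm n0] at h2

lemma tailRel_rayGeo (hT : T.IsTree) (r : V) (v : Geo T) : tailRel T v (rayGeo hT r v) := by
  obtain ⟨a, b, h⟩ := rayGeo_meets hT r v
  exact (Relation.EqvGen.rel _ _ ⟨a, rfl⟩).trans _ _ _
    (h ▸ (Relation.EqvGen.rel _ _ ⟨b, rfl⟩).symm _ _)

/-- The class of a geodesic in the boundary. -/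
def toBdry (v : Geo T) : Bdry T := Quotient.mk (tailSetoid T) v

lemma toBdry_shift (v : Geo T) (m : ℕ) : toBdry ((geoShift T)^[m] v) = toBdry v :=
  Quotient.sound (s := tailSetoid T) ((Relation.EqvGen.rel _ _ ⟨m, rfl⟩).symm _ _)

/-- The Borel section of the boundary map. -/
noncomputable def bdrySec (hT : T.IsTree) (r : V) (x : Bdry T) : Geo T :=
  Quotient.lift (s := tailSetoid T) (rayGeo hT r) (fun _ _ h => rayGeo_tail hT r h) x

lemma bdrySec_toBdry (hT : T.IsTree) (r : V) (v : Geo T) :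
    bdrySec hT r (toBdry v) = rayGeo hT r v := rfl

lemma toBdry_bdrySec (hT : T.IsTree) (r : V) (x : Bdry T) : toBdry (bdrySec hT r x) = x := by
  induction x using Quotient.inductionOn with
  | h v => exact Quotient.sound (s := tailSetoid T) ((tailRel_rayGeo hT r v).symm _ _)

lemma bdrySec_meets (hT : T.IsTree) (r : V) (v : Geo T) :
    ∃ a b, (geoShift T)^[a] v = (geoShift T)^[b] (bdrySec hT r (toBdry v)) :=
  rayGeo_meets hT r v

lemma bdrySec_injective (hT : T.IsTree) (r : V) : Injective (bdrySec hT r) := by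
  intro x y h
  rw [← toBdry_bdrySec hT r x, h, toBdry_bdrySec]

section Meas

variable [Countable V] [MeasurableSpace V] [DiscreteMeasurableSpace V]

lemma measurable_toBdry : Measurable (toBdry (T := T)) := measurable_quotient_mk''

lemma measurable_rayGeo (hT : T.IsTree) (r : V) : Measurable (rayGeo hT r) := by
  refine Measurable.subtype_mk (measurable_pi_lambda _ fun k => ?_)
  refine measurable_to_countable' fun w => ?_
  have : (fun v => rayFun hT r v k) ⁻¹' {w} = {v : Geo T | RayAt T r v.1 k w} := by
    ext v; exact rayFun_eq_iff hT r v k w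
  rw [this]
  refine measurableSet_setOfPred.mpr (Measurable.exists fun N => Measurable.forall fun n =>
    measurable_const.imp ?_)
  have h1 : Measurable fun v : Geo T => v.1 n :=
    (measurable_pi_apply n).comp measurable_subtype_coe
  have h2 : Measurable fun u : V => (treeAnc T r k u = w ∧ k ≤ T.dist r u) :=
    Measurable.of_discrete
  exact h2.comp h1

lemma measurable_bdrySec (hT : T.IsTree) (r : V) : Measurable (bdrySec hT r) :=
  measurable_from_quotient.mpr (measurable_rayGeo hT r)

end Meas

section Act

variable {G : Type*} [Group G] [MulAction G V]

lemma bdrySmul_toBdry (h : IsGraphAction T G) (g : G) (v : Geo T) :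
    bdrySmul h g (toBdry v) = toBdry (geoSmul h g v) := rfl

lemma measurable_geoSmul [Countable V] [MeasurableSpace V] [DiscreteMeasurableSpace V]
    (h : IsGraphAction T G) (g : G) : Measurable (geoSmul h g) := by
  refine Measurable.subtype_mk (measurable_pi_lambda _ fun k => ?_)
  have h1 : Measurable fun v : Geo T => v.1 k :=
    (measurable_pi_apply k).comp measurable_subtype_coe
  exact (Measurable.of_discrete (f := fun u : V => g • u)).comp h1

lemma measurable_bdrySmul [Countable V] [MeasurableSpace V] [DiscreteMeasurableSpace V]
    (h : IsGraphAction T G) (g : G) : Measurable (bdrySmul h g) :=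
  measurable_from_quotient.mpr (measurable_toBdry.comp (measurable_geoSmul h g))

lemma geoSmul_one (h : IsGraphAction T G) (v : Geo T) : geoSmul h 1 v = v :=
  Subtype.ext (funext fun n => one_smul G (v.1 n))

lemma geoSmul_mul (h : IsGraphAction T G) (a b : G) (v : Geo T) :
    geoSmul h (a * b) v = geoSmul h a (geoSmul h b v) :=
  Subtype.ext (funext fun n => mul_smul a b (v.1 n))

end Act

end TreeSection



/-! ### Averages along finitely supported weights -/

section Averages

/-- The average of `f` with respect to the normalised weights `q`. -/
noncomputable def wavg {A : Type*} (q : A →₀ ℕ) (f : A → ℝ) : ℝ :=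
  (q.sum fun a n => (n : ℝ) * f a) / (q.sum fun _ n => (n : ℝ))

open Classical in
/-- The sign of a proposition. -/
noncomputable def sgp (P : Prop) : ℝ := if P then 1 else -1

lemma abs_sgp (P : Prop) : |sgp P| ≤ 1 := by
  unfold sgp; split_ifs <;> simp

lemma wt_pos {A : Type*} {q : A →₀ ℕ} (hq : q ≠ 0) : 0 < q.sum fun _ n => (n : ℝ) := by
  obtain ⟨a, ha⟩ := Finsupp.support_nonempty_iff.mpr hq
  refine Finset.sum_pos' (fun _ _ => Nat.cast_nonneg _) ⟨a, ha, ?_⟩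
  exact Nat.cast_pos.mpr (Nat.pos_of_ne_zero (Finsupp.mem_support_iff.mp ha))

lemma wavg_mapDomain {A B : Type*} (q : A →₀ ℕ) (m : A → B) (f : B → ℝ) :
    wavg (q.mapDomain m) f = wavg q (fun a => f (m a)) := by
  unfold wavg
  rw [Finsupp.sum_mapDomain_index, Finsupp.sum_mapDomain_index]
  · simp
  · intro b m n; push_cast; ring
  · simp
  · intro b m n; push_cast; ring

lemma wavg_congr {A : Type*} (q : A →₀ ℕ) {f f' : A → ℝ} (h : ∀ a ∈ q.support, f a = f' a) :
    wavg q f = wavg q f' := by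
  unfold wavg
  congr 1
  exact Finset.sum_congr rfl fun a ha => by simp only [h a ha]

lemma mapDomain_ne_zero {A B : Type*} {q : A →₀ ℕ} (m : A → B) (hq : q ≠ 0) :
    q.mapDomain m ≠ 0 := by
  intro h
  have h1 := wt_pos hq
  have h2 : ((q.mapDomain m).sum fun _ n => (n : ℝ)) = q.sum fun _ n => (n : ℝ) := by
    rw [Finsupp.sum_mapDomain_index]
    · simp
    · intro b m n; push_cast; ring
  rw [h, Finsupp.sum_zero_index] at h2
  linarith

lemma summable_mul_bdd {A : Type*} {p f : A → ℝ} (hp : ∀ a, 0 ≤ p a) (hs : Summable p)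
    (hf : ∀ a, |f a| ≤ 1) : Summable fun a => p a * f a := by
  refine Summable.of_norm_bounded hs fun a => ?_
  rw [Real.norm_eq_abs, abs_mul, abs_of_nonneg (hp a)]
  exact mul_le_of_le_one_right (hp a) (hf a)

lemma abs_tsum_mul_le {A : Type*} {p f : A → ℝ} (hp : ∀ a, 0 ≤ p a) (hs : Summable p)
    (hf : ∀ a, |f a| ≤ 1) : |∑' a, p a * f a| ≤ ∑' a, p a := by
  have h := tsum_of_norm_bounded (f := fun a => p a * f a) hs.hasSum fun a => by
    rw [Real.norm_eq_abs, abs_mul, abs_of_nonneg (hp a)]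
    exact mul_le_of_le_one_right (hp a) (hf a)
  rwa [Real.norm_eq_abs] at h

lemma wavg_approx {A : Type*} {p : A → ℝ} (hp : IsProbFun p) {ε : ℝ} (hε : 0 < ε) :
    ∃ q : A →₀ ℕ, q ≠ 0 ∧ ∀ f : A → ℝ, (∀ a, |f a| ≤ 1) →
      |(∑' a, p a * f a) - wavg q f| ≤ ε := by
  obtain ⟨h0, h1⟩ := hp
  obtain ⟨δ, hδ, hδ2, hδε⟩ : ∃ δ : ℝ, 0 < δ ∧ δ ≤ 1 / 2 ∧ δ ≤ ε / 2 :=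
    ⟨min (1 / 2) (ε / 2), by positivity, min_le_left _ _, min_le_right _ _⟩
  obtain ⟨N, hN, hNδ⟩ := ((eventually_gt_atTop 0).and (floor_approx h0 h1 hδ)).exists
  have hN' : (0 : ℝ) < N := by exact_mod_cast hN
  have hfin : (Function.support fun a => ⌊p a * N⌋₊).Finite := by
    refine (floor_support_finite h1 N).subset fun a ha => ?_
    exact Nat.pos_of_ne_zero ha
  set q : A →₀ ℕ := Finsupp.ofSupportFinite _ hfin with hq
  have hqa : ∀ a, q a = ⌊p a * N⌋₊ := fun a => rfl
  set t : A → ℝ := fun a => (⌊p a * N⌋₊ : ℝ) / N with ht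
  have ht0 : ∀ a, 0 ≤ t a := fun a => by positivity
  have htp : ∀ a, t a ≤ p a := by
    intro a
    rw [ht, div_le_iff₀ hN']
    exact Nat.floor_le (mul_nonneg (h0 a) hN'.le)
  have hts : Summable t := Summable.of_nonneg_of_le ht0 htp h1.summable
  have htsum : ∀ f : A → ℝ, ∑' a, t a * f a = (q.sum fun a n => (n : ℝ) * f a) / N := by
    intro f
    rw [tsum_eq_sum (s := q.support), Finsupp.sum, Finset.sum_div]
    · refine Finset.sum_congr rfl fun a _ => ?_
      rw [hqa]; simp only [ht]; ring
    · intro a ha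
      have : q a = 0 := Finsupp.notMem_support_iff.mp ha
      rw [hqa] at this
      simp [ht, this]
  set W : ℝ := q.sum fun _ n => (n : ℝ) with hW
  have htW : ∑' a, t a = W / N := by
    have := htsum fun _ => 1
    simpa using this
  have hpt : ∑' a, (p a - t a) = 1 - W / N := by
    rw [h1.summable.tsum_sub hts, h1.tsum_eq, htW]
  have hpt0 : ∀ a, 0 ≤ p a - t a := fun a => sub_nonneg.mpr (htp a)
  have hpts : Summable fun a => p a - t a := h1.summable.sub hts
  have hle : 0 ≤ 1 - W / N := hpt ▸ tsum_nonneg hpt0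
  have hlt : 1 - W / N < δ := hpt ▸ hNδ
  have hapos : 0 < W / N := by linarith
  refine ⟨q, ?_, fun f hf => ?_⟩
  · intro h
    rw [hW, h, Finsupp.sum_zero_index] at hapos
    simp at hapos
  have e1 : ∑' a, p a * f a = ∑' a, (p a - t a) * f a + ∑' a, t a * f a := by
    rw [← (summable_mul_bdd hpt0 hpts hf).tsum_add (summable_mul_bdd ht0 hts hf)]
    refine tsum_congr fun a => by ring
  have b1 := abs_tsum_mul_le hpt0 hpts hf
  have b2 := abs_tsum_mul_le ht0 hts hf
  rw [hpt] at b1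
  rw [htW] at b2
  set a : ℝ := W / N with ha
  set b : ℝ := ∑' a, t a * f a with hb
  have e2 : wavg q f = b / a := by
    rw [hb, htsum f, ha, wavg, ← hW, div_div_div_cancel_right₀ hN'.ne']
  have b3 : |b - b / a| ≤ 1 - a := by
    have : b - b / a = b / a * (a - 1) := by field_simp
    rw [this, abs_mul, abs_div, abs_of_pos hapos, abs_sub_comm, abs_of_nonneg hle]
    refine mul_le_of_le_one_left hle ?_
    rw [div_le_one hapos]; exact b2
  rw [e1, e2]
  calc |∑' a, (p a - t a) * f a + b - b / a|
      = |∑' a, (p a - t a) * f a + (b - b / a)| := by ring_nf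
    _ ≤ |∑' a, (p a - t a) * f a| + |b - b / a| := abs_add_le _ _
    _ ≤ ε := by linarith

lemma hasSum_push {G X : Type*} [Group G] [MulAction G X] {p : G → ℝ} (hp : IsProbFun p)
    (x : X) {ψ : X → ℝ} (hψ : ∀ y, |ψ y| ≤ 1) :
    HasSum (fun y => pushMeasure p x y * ψ y) (∑' g, p g * ψ (g • x)) := by
  have hs : Summable fun g => p g * ψ (g • x) :=
    summable_mul_bdd hp.1 hp.2.summable fun g => hψ _
  have h1 := ((Equiv.sigmaFiberEquiv fun g : G => g • x).hasSum_iff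
    (f := fun g => p g * ψ (g • x))).mpr hs.hasSum
  refine h1.sigma fun y => ?_
  have h2 : Summable fun g : {g : G // g • x = y} => p g.1 :=
    hp.2.summable.subtype _
  have h3 := h2.hasSum.mul_right (ψ y)
  have h4 : (fun c : {g : G // g • x = y} =>
      ((fun g => p g * ψ (g • x)) ∘ Equiv.sigmaFiberEquiv fun g : G => g • x) ⟨y, c⟩) =
      fun g : {g : G // g • x = y} => p g.1 * ψ y := by
    funext g
    change p g.1 * ψ (g.1 • x) = _
    rw [g.2]
  rw [h4]
  exact h3

lemma push_diff_le {G X : Type*} [Group G] [MulAction G X] {p : G → ℝ} (hp : IsProbFun p)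
    (x x' : X) {ψ : X → ℝ} (hψ : ∀ y, |ψ y| ≤ 1) :
    |∑' g, p g * ψ (g • x) - ∑' g, p g * ψ (g • x')| ≤
      l1dist (pushMeasure p x) (pushMeasure p x') := by
  have h1 := hasSum_push hp x hψ
  have h2 := hasSum_push hp x' hψ
  have hs : ∀ x : X, Summable (pushMeasure p x) := by
    intro x
    have := (hasSum_push hp x (ψ := fun _ => 1) (by simp)).summable
    simpa using this
  have h3 := (h1.sub h2).tsum_eq
  rw [← h3]
  have h4 : Summable fun y => |pushMeasure p x y - pushMeasure p x' y| :=
    ((hs x).sub (hs x')).abs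
  have h5 := tsum_of_norm_bounded
    (f := fun y => pushMeasure p x y * ψ y - pushMeasure p x' y * ψ y) h4.hasSum fun y => by
      rw [← sub_mul, Real.norm_eq_abs, abs_mul]
      exact mul_le_of_le_one_right (abs_nonneg _) (hψ y)
  exact h5

end Averages



/-! ### Borel almost invariant averages on geodesics -/

section Selection

variable {G V : Type*} [Group G] [MulAction G V]

/-- `q` is an `(S, ε)`-almost invariant weight for the action of the stabilizer of the first
`n + 1` vertices of `u` on the orbit of `u`. -/
def AlmInv (u : ℕ → V) (n : ℕ) (S : Finset G) (ε : ℝ) (q : G →₀ ℕ) : Prop :=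
  ∀ k s : G, k ∈ initStab G u n → s ∈ S → s ∈ initStab G u n → ∀ D : Set (ℕ → V),
    |wavg q (fun g => sgp (g • k • u ∈ D)) - wavg q (fun g => sgp (g • s • k • u ∈ D))| ≤ ε

open Classical in
lemma almInv_iff (u : ℕ → V) (n : ℕ) (S : Finset G) (ε : ℝ) (q : G →₀ ℕ) :
    AlmInv u n S ε q ↔ ∀ k s : G, k ∈ initStab G u n → s ∈ S → s ∈ initStab G u n →
      ∀ F : Finset G, (∀ a b : G, a ∈ q.support.image (fun g => g * k) ∪
          q.support.image (fun g => g * s * k) → b ∈ q.support.image (fun g => g * k) ∪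
          q.support.image (fun g => g * s * k) → a • u = b • u → (a ∈ F ↔ b ∈ F)) →
      |wavg q (fun g => sgp (g * k ∈ F)) - wavg q (fun g => sgp (g * s * k ∈ F))| ≤ ε := by
  constructor
  · intro h k s hk hs hsk F hF
    have h1 := h k s hk hs hsk {y | ∃ a ∈ q.support.image (fun g => g * k) ∪
          q.support.image (fun g => g * s * k), a ∈ F ∧ a • u = y}
    have key : ∀ a ∈ q.support.image (fun g => g * k) ∪ q.support.image (fun g => g * s * k),
        (a ∈ F ↔ ∃ b ∈ q.support.image (fun g => g * k) ∪
          q.support.image (fun g => g * s * k), b ∈ F ∧ b • u = a • u) := by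
      intro a ha
      constructor
      · intro haF
        exact ⟨a, ha, haF, rfl⟩
      · rintro ⟨b, hb, hbF, hba⟩
        exact (hF b a hb ha hba).mp hbF
    convert h1 using 3
    · refine wavg_congr q fun g hg => ?_
      congr 1
      rw [key (g * k) (Finset.mem_union_left _ (Finset.mem_image_of_mem _ hg)), mul_smul]
      rfl
    · refine wavg_congr q fun g hg => ?_
      congr 1
      rw [key (g * s * k) (Finset.mem_union_right _ (Finset.mem_image_of_mem _ hg)),
        mul_smul, mul_smul]
      rfl
  · intro h k s hk hs hsk D
    have h1 := h k s hk hs hsk ((q.support.image (fun g => g * k) ∪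
          q.support.image (fun g => g * s * k)).filter fun a => a • u ∈ D) (by
        intro a b ha hb hab
        simp only [Finset.mem_filter, ha, hb, true_and, hab])
    convert h1 using 3
    · refine wavg_congr q fun g hg => ?_
      congr 1
      have := Finset.mem_union_left (q.support.image (fun g => g * s * k))
        (Finset.mem_image_of_mem (fun g => g * k) hg)
      rw [Finset.mem_filter, ← mul_smul, eq_iff_iff]
      exact ⟨fun h => ⟨this, h⟩, fun h => h.2⟩
    · refine wavg_congr q fun g hg => ?_
      congr 1
      have := Finset.mem_union_right (q.support.image (fun g => g * k))
        (Finset.mem_image_of_mem (fun g => g * s * k) hg)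
      rw [Finset.mem_filter, ← mul_smul, ← mul_smul, eq_iff_iff]
      exact ⟨fun h => ⟨this, h⟩, fun h => h.2⟩

lemma initStab_smul_self {u : ℕ → V} {n : ℕ} {s : G} (hs : s ∈ initStab G u n) :
    initStab G (s • u) n = initStab G u n := by
  ext g
  change (∀ k ≤ n, g • s • u k = s • u k) ↔ ∀ k ≤ n, g • u k = u k
  refine forall₂_congr fun k hk => ?_
  rw [hs k hk]

lemma AlmInv.smul {u : ℕ → V} {n : ℕ} {S : Finset G} {ε : ℝ} {q : G →₀ ℕ}
    (h : AlmInv u n S ε q) {s : G} (hs : s ∈ initStab G u n) : AlmInv (s • u) n S ε q := by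
  intro k s' hk hs' hs'k D
  rw [initStab_smul_self hs] at hk hs'k
  have := h (k * s) s' (mul_mem hk hs) hs' hs'k D
  simpa only [mul_smul] using this

lemma almInv_smul_iff {u : ℕ → V} {n : ℕ} {S : Finset G} {ε : ℝ} {q : G →₀ ℕ}
    {s : G} (hs : s ∈ initStab G u n) : AlmInv (s • u) n S ε q ↔ AlmInv u n S ε q := by
  refine ⟨fun h => ?_, fun h => h.smul hs⟩
  have h1 : s⁻¹ ∈ initStab G (s • u) n := by
    rw [initStab_smul_self hs]; exact inv_mem hs
  have := h.smul h1
  rwa [inv_smul_smul] at this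

open Classical in
lemma exists_almInv {v : ℕ → V} {n : ℕ}
    (hv : UniformlyCoamenable ((ptwiseStab G v).subgroupOf (initStab G v n)))
    (h : G) (S : Finset G) {ε : ℝ} (hε : 0 < ε) :
    ∃ q : G →₀ ℕ, q ≠ 0 ∧ AlmInv (h • v) n S ε q := by
  set K := initStab G v n with hK
  set H := (ptwiseStab G v).subgroupOf K with hH
  obtain ⟨p, hp, hpS⟩ := hv ((S.image fun s => h⁻¹ * s * h).subtype fun s => s ∈ K) (ε / 3)
    (by positivity)
  obtain ⟨q, hq0, hq⟩ := wavg_approx hp (ε := ε / 3) (by positivity)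
  refine ⟨q.mapDomain fun k => k.1 * h⁻¹, mapDomain_ne_zero _ hq0, ?_⟩
  have hconj : ∀ {k : G}, k ∈ initStab G (h • v) n → h⁻¹ * k * h ∈ K := by
    intro k hk j hj
    have := hk j hj
    rw [mul_smul, mul_smul]
    rw [inv_smul_eq_iff]
    exact this
  intro k s hk hs hsk D
  rw [wavg_mapDomain, wavg_mapDomain]
  -- lift to the coset space
  let ψ : K ⧸ H → ℝ := Quotient.lift (fun a : K => sgp (a.1 • v ∈ D)) (by
    intro a b hab
    have h1 : a⁻¹ * b ∈ H := QuotientGroup.leftRel_apply.mp hab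
    have h2 : ∀ j, (a.1⁻¹ * b.1) • v j = v j := h1
    have h3 : a.1 • v = b.1 • v := by
      funext j
      have := h2 j
      rw [mul_smul, inv_smul_eq_iff] at this
      exact this.symm
    simp only [h3])
  have hψ : ∀ y, |ψ y| ≤ 1 := by
    intro y
    induction y using Quotient.inductionOn with
    | h a => exact abs_sgp _
  let k0 : K := ⟨_, hconj hk⟩
  let s0 : K := ⟨_, hconj hsk⟩
  have hs0 : s0 ∈ (S.image fun s => h⁻¹ * s * h).subtype fun s => s ∈ K :=
    Finset.mem_subtype.mpr (Finset.mem_image_of_mem _ hs)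
  have h1 := hpS s0 hs0 (k0 : K ⧸ H)
  have h2 := push_diff_le hp (k0 : K ⧸ H) (s0 • (k0 : K ⧸ H)) hψ
  have h3 := hq (fun a => ψ (a • (k0 : K ⧸ H))) fun a => hψ _
  have h4 := hq (fun a => ψ (a • s0 • (k0 : K ⧸ H))) fun a => hψ _
  have e1 : (fun a : K => sgp ((a.1 * h⁻¹) • k • h • v ∈ D)) =
      fun a => ψ (a • (k0 : K ⧸ H)) := by
    funext a
    change _ = sgp ((a * k0).1 • v ∈ D)
    congr 2
    change _ = (a.1 * (h⁻¹ * k * h)) • v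
    simp only [mul_smul]
  have e2 : (fun a : K => sgp ((a.1 * h⁻¹) • s • k • h • v ∈ D)) =
      fun a => ψ (a • s0 • (k0 : K ⧸ H)) := by
    funext a
    change _ = sgp ((a * (s0 * k0)).1 • v ∈ D)
    congr 2
    change _ = (a.1 * ((h⁻¹ * s * h) * (h⁻¹ * k * h))) • v
    simp only [mul_smul, smul_inv_smul]
  rw [e1, e2]
  rw [abs_le] at *
  constructor <;> linarith [h3.1, h3.2, h4.1, h4.2, h2.1, h2.2]

/-- The restriction to the first `n + 1` vertices. -/
def resTo (n : ℕ) (w : ℕ → V) : Fin (n + 1) → V := fun i => w i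

lemma exists_normalizer (n : ℕ) (σ : Fin (n + 1) → V) :
    ∃ g : G, g • σ = Quotient.out (s := MulAction.orbitRel G (Fin (n + 1) → V))
      (Quotient.mk (MulAction.orbitRel G (Fin (n + 1) → V)) σ) := by
  have := Quotient.mk_out (s := MulAction.orbitRel G (Fin (n + 1) → V)) σ
  exact this

/-- Group element moving `σ` to the chosen representative of its orbit. -/
noncomputable def normalizerElt (G : Type*) {V : Type*} [Group G] [MulAction G V] (n : ℕ)
    (σ : Fin (n + 1) → V) : G := (exists_normalizer (G := G) n σ).choose

lemma normalizerElt_spec (n : ℕ) (h : G) (σ : Fin (n + 1) → V) :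
    normalizerElt G n (h • σ) • h • σ = normalizerElt G n σ • σ := by
  have h1 := (exists_normalizer (G := G) n σ).choose_spec
  have h2 := (exists_normalizer (G := G) n (h • σ)).choose_spec
  have h3 : Quotient.mk (MulAction.orbitRel G (Fin (n + 1) → V)) (h • σ) =
      Quotient.mk (MulAction.orbitRel G (Fin (n + 1) → V)) σ :=
    Quotient.sound (s := MulAction.orbitRel G (Fin (n + 1) → V)) ⟨h, rfl⟩
  exact h2.trans ((congrArg _ h3).trans h1.symm)

/-- The normalised sequence. -/
noncomputable def normSeq (G : Type*) {V : Type*} [Group G] [MulAction G V] (n : ℕ)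
    (w : ℕ → V) : ℕ → V := normalizerElt G n (resTo n w) • w

lemma normSeq_smul (n : ℕ) (h : G) (w : ℕ → V) :
    ∃ s ∈ initStab G (normSeq G n w) n, normSeq G n (h • w) = s • normSeq G n w := by
  refine ⟨normalizerElt G n (resTo n (h • w)) * h * (normalizerElt G n (resTo n w))⁻¹, ?_, ?_⟩
  · intro k hk
    have h1 := congrFun (normalizerElt_spec n h (resTo n w)) ⟨k, by omega⟩
    change normalizerElt G n (resTo n (h • w)) • h • w k = normalizerElt G n (resTo n w) • w k
      at h1
    change _ • normalizerElt G n (resTo n w) • w k = normalizerElt G n (resTo n w) • w k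
    rw [mul_smul, mul_smul, inv_smul_smul, h1]
  · rw [normSeq, normSeq, mul_smul, mul_smul, inv_smul_smul]

section Meas

variable [Countable G] [Countable V] [MeasurableSpace V] [DiscreteMeasurableSpace V]

lemma measurable_vertex_eq {X : Type*} [MeasurableSpace X] {f f' : X → V} (hf : Measurable f)
    (hf' : Measurable f') : Measurable fun x => f x = f' x :=
  measurableSet_setOfPred.mp (measurableSet_eq_fun hf hf')

lemma measurable_seq_smul (g : G) : Measurable fun w : ℕ → V => g • w :=
  measurable_pi_lambda _ fun k =>
    (Measurable.of_discrete (f := fun u : V => g • u)).comp (measurable_pi_apply k)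

lemma measurable_seq_eq {X : Type*} [MeasurableSpace X] {f f' : X → ℕ → V} (hf : Measurable f)
    (hf' : Measurable f') : Measurable fun x => f x = f' x := by
  simp only [funext_iff]
  exact Measurable.forall fun k => measurable_vertex_eq
    ((measurable_pi_apply k).comp hf) ((measurable_pi_apply k).comp hf')

lemma measurable_mem_initStab (g : G) (n : ℕ) :
    Measurable fun w : ℕ → V => g ∈ initStab G w n := by
  change Measurable fun w : ℕ → V => ∀ k ≤ n, g • w k = w k
  refine Measurable.forall fun k => measurable_const.imp (measurable_vertex_eq ?_ ?_)
  · exact (measurable_pi_apply k).comp (measurable_seq_smul g)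
  · exact measurable_pi_apply k

open Classical in
lemma measurable_almInv (n : ℕ) (S : Finset G) (ε : ℝ) (q : G →₀ ℕ) :
    Measurable fun w : ℕ → V => AlmInv w n S ε q := by
  simp only [almInv_iff]
  refine Measurable.forall fun k => Measurable.forall fun s =>
    (measurable_mem_initStab k n).imp <| measurable_const.imp <|
    (measurable_mem_initStab s n).imp <| Measurable.forall fun F => Measurable.imp ?_
      measurable_const
  refine Measurable.forall fun a => Measurable.forall fun b => measurable_const.imp <|
    measurable_const.imp <| Measurable.imp ?_ measurable_const
  exact measurable_seq_eq (measurable_seq_smul a) (measurable_seq_smul b)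

lemma measurable_resTo (n : ℕ) : Measurable (resTo (V := V) n) :=
  measurable_pi_lambda _ fun i => measurable_pi_apply _

lemma measurable_normSeq (n : ℕ) : Measurable (normSeq (V := V) G n) := by
  refine measurable_pi_lambda _ fun k => ?_
  have h1 : Measurable fun w : ℕ → V => (resTo n w, w k) :=
    (measurable_resTo n).prodMk (measurable_pi_apply k)
  exact (Measurable.of_discrete (f := fun z : (Fin (n + 1) → V) × V =>
    normalizerElt G n z.1 • z.2)).comp h1

end Meas

open Classical in
/-- Borel assignment of almost invariant weights to geodesics. -/
lemma exists_weights {T : SimpleGraph V} [Countable G] [Countable V] [MeasurableSpace V]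
    [DiscreteMeasurableSpace V] (hact : IsGraphAction T G)
    (hstab : ∀ v : Geo T, ∃ n : ℕ,
      UniformlyCoamenable ((ptwiseStab G v.1).subgroupOf (initStab G v.1 n))) :
    ∃ q : ℕ → Geo T → G →₀ ℕ, (∀ j w, q j w ≠ 0) ∧
      (∀ j q0, MeasurableSet {w | q j w = q0}) ∧
      ∀ (w : Geo T) (h : G), ∀ᶠ j : ℕ in atTop, ∀ D : Set (ℕ → V),
        |wavg (q j w) (fun g => sgp ((geoSmul hact g w).1 ∈ D)) -
          wavg (q j (geoSmul hact h w))
            (fun g => sgp ((geoSmul hact g (geoSmul hact h w)).1 ∈ D))| ≤ 1 / ((j : ℝ) + 1) := by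
  obtain ⟨en, hen⟩ := exists_surjective_nat G
  obtain ⟨eq, heq⟩ := exists_surjective_nat (G →₀ ℕ)
  set S : ℕ → Finset G := fun j => (Finset.range j).image en with hS
  -- the stage predicate
  set P : Geo T → ℕ → ℕ → ℕ → Prop := fun w n j i =>
    eq i ≠ 0 ∧ AlmInv (normSeq G n w.1) n (S j) (1 / ((j : ℝ) + 1)) (eq i) with hP
  have hPm : ∀ n j i, Measurable fun w => P w n j i := fun n j i =>
    measurable_const.and ((measurable_almInv n (S j) _ (eq i)).comp
      ((measurable_normSeq n).comp measurable_subtype_coe))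
  have hPinv : ∀ w h n j i, P (geoSmul hact h w) n j i ↔ P w n j i := by
    intro w h n j i
    obtain ⟨s, hs, hsw⟩ := normSeq_smul n h w.1
    have h1 : normSeq G n (geoSmul hact h w).1 = s • normSeq G n w.1 := hsw
    simp only [hP]
    rw [h1, almInv_smul_iff hs]
  have hex : ∀ w, ∃ n, ∀ j, ∃ i, P w n j i := by
    intro w
    obtain ⟨n, hn⟩ := hstab w
    refine ⟨n, fun j => ?_⟩
    obtain ⟨q, hq0, hq⟩ := exists_almInv hn (normalizerElt G n (resTo n w.1)) (S j)
      (ε := 1 / ((j : ℝ) + 1)) (by positivity)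
    obtain ⟨i, rfl⟩ := heq q
    exact ⟨i, hq0, hq⟩
  set nn : Geo T → ℕ := fun w => Nat.find (hex w) with hnn
  have hnnm : Measurable nn := measurable_find hex fun n => measurableSet_setOfPred.mpr <|
    Measurable.forall fun j => Measurable.exists fun i => hPm n j i
  have hnninv : ∀ w h, nn (geoSmul hact h w) = nn w := by
    intro w h
    refine Nat.find_congr' fun {n} => ?_
    simp only [hPinv]
  have hex2 : ∀ j w, ∃ i, P w (nn w) j i := fun j w => Nat.find_spec (hex w) j
  set ii : ℕ → Geo T → ℕ := fun j w => Nat.find (hex2 j w) with hii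
  have hiim : ∀ j, Measurable (ii j) := by
    intro j
    refine measurable_find (hex2 j) fun i => measurableSet_setOfPred.mpr ?_
    have h1 : Measurable fun z : ℕ × Geo T => P z.2 z.1 j i :=
      measurable_from_prod_countable_right fun n => hPm n j i
    exact h1.comp (hnnm.prodMk measurable_id)
  have hiiinv : ∀ j w h, ii j (geoSmul hact h w) = ii j w := by
    intro j w h
    refine Nat.find_congr' fun {n} => ?_
    rw [hPinv, hnninv]
  have hiis : ∀ j w, P w (nn w) j (ii j w) := fun j w => Nat.find_spec (hex2 j w)
  refine ⟨fun j w => (eq (ii j w)).mapDomain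
    fun g => g * normalizerElt G (nn w) (resTo (nn w) w.1), ?_, ?_, ?_⟩
  · intro j w
    exact mapDomain_ne_zero _ (hiis j w).1
  · intro j q0
    refine measurableSet_setOfPred.mpr ?_
    have h1 : Measurable fun z : (ℕ × ℕ) × Geo T => (eq z.1.1).mapDomain
        (fun g => g * normalizerElt G z.1.2 (resTo z.1.2 z.2.1)) = q0 := by
      refine measurable_from_prod_countable_right fun z => ?_
      have h2 : Measurable fun σ : Fin (z.2 + 1) → V => (eq z.1).mapDomain
        (fun g => g * normalizerElt G z.2 σ) = q0 := Measurable.of_discrete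
      exact h2.comp ((measurable_resTo z.2).comp measurable_subtype_coe)
    exact h1.comp (((hiim j).prodMk hnnm).prodMk measurable_id)
  · intro w h
    obtain ⟨s, hs, hsw⟩ := normSeq_smul (nn w) h w.1
    obtain ⟨j0, hj0⟩ := hen s
    filter_upwards [eventually_gt_atTop j0] with j hj D
    have h1 := (hiis j w).2 1 s (one_mem _)
      (by rw [hS, Finset.mem_image]; exact ⟨j0, Finset.mem_range.mpr hj, hj0⟩) hs D
    rw [wavg_mapDomain, wavg_mapDomain, hiiinv, hnninv]
    rw [one_smul, ← hsw] at h1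
    have e1 : ∀ (v : Geo T) (n : ℕ) (g : G),
        (geoSmul hact (g * normalizerElt G n (resTo n v.1)) v).1 = g • normSeq G n v.1 :=
      fun v n g => mul_smul g _ v.1
    simp only [e1]
    exact h1

end Selection



/-! ### Assembly -/

section Assembly

open Classical in
/-- Pushforward of the normalised weights `q` under `f`. -/
noncomputable def wpush {A Y : Type*} (q : A →₀ ℕ) (f : A → Y) (y : Y) : ℝ :=
  wavg q (fun a => if f a = y then 1 else 0)

lemma wavg_nonneg {A : Type*} (q : A →₀ ℕ) {f : A → ℝ} (hf : ∀ a, 0 ≤ f a) : 0 ≤ wavg q f :=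
  div_nonneg (Finset.sum_nonneg fun a _ => mul_nonneg (Nat.cast_nonneg _) (hf a))
    (Finset.sum_nonneg fun _ _ => Nat.cast_nonneg _)

lemma wavg_one {A : Type*} {q : A →₀ ℕ} (hq : q ≠ 0) : wavg q (fun _ => 1) = 1 := by
  unfold wavg
  simp only [mul_one]
  exact div_self (wt_pos hq).ne'

lemma abs_wavg_le {A : Type*} {q : A →₀ ℕ} {f : A → ℝ} (hf : ∀ a, |f a| ≤ 1) :
    |wavg q f| ≤ 1 := by
  have h0 : 0 ≤ q.sum fun _ n => (n : ℝ) := Finset.sum_nonneg fun _ _ => Nat.cast_nonneg _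
  unfold wavg
  rw [abs_div, abs_of_nonneg h0]
  refine div_le_one_of_le₀ ((Finset.abs_sum_le_sum_abs _ _).trans ?_) h0
  refine Finset.sum_le_sum fun a _ => ?_
  rw [abs_mul, abs_of_nonneg (Nat.cast_nonneg _)]
  exact mul_le_of_le_one_right (Nat.cast_nonneg _) (hf a)

lemma hasSum_wpush {A Y : Type*} (q : A →₀ ℕ) (f : A → Y) (φ : Y → ℝ) :
    HasSum (fun y => wpush q f y * φ y) (wavg q fun a => φ (f a)) := by
  classical
  have h1 : HasSum (fun y => ∑ a ∈ q.support, (q a : ℝ) * (if f a = y then 1 else 0) * φ y)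
      (∑ a ∈ q.support, (q a : ℝ) * φ (f a)) := by
    refine hasSum_sum fun a _ => ?_
    have h0 : (fun y => (q a : ℝ) * (if f a = y then 1 else 0) * φ y) =
        fun y => if y = f a then (q a : ℝ) * φ (f a) else 0 := by
      funext y
      by_cases h : y = f a
      · subst h; simp
      · simp [h, Ne.symm h]
    rw [h0]
    exact hasSum_ite_eq (f a) ((q a : ℝ) * φ (f a))
  have h2 := h1.div_const (q.sum fun _ n => (n : ℝ))
  have h3 : (fun y => wpush q f y * φ y) = fun y =>
      (∑ a ∈ q.support, (q a : ℝ) * (if f a = y then 1 else 0) * φ y) /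
        (q.sum fun _ n => (n : ℝ)) := by
    funext y
    unfold wpush wavg
    rw [← Finset.sum_mul, Finsupp.sum, div_mul_eq_mul_div]
  rw [h3]
  exact h2

lemma measurable_wpush {X Y A : Type*} [MeasurableSpace X] (q : A →₀ ℕ) (f : X → A → Y)
    (y : X → Y) (h : ∀ a, MeasurableSet {x | f x a = y x}) :
    Measurable fun x => wpush q (f x) (y x) := by
  unfold wpush wavg
  refine Measurable.div_const ?_ _
  unfold Finsupp.sum
  refine Finset.measurable_sum _ fun g _ => ?_
  exact Measurable.const_mul (Measurable.ite (h g) measurable_const measurable_const) _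

lemma measurable_select {X Q : Type*} [Countable Q] [MeasurableSpace X]
    (q : X → Q) (hq : ∀ q0, MeasurableSet {x | q x = q0}) (h : Q → X → ℝ)
    (hm : ∀ q0, Measurable (h q0)) : Measurable fun x => h (q x) x := by
  intro s hs
  have : (fun x => h (q x) x) ⁻¹' s = ⋃ q0, {x | q x = q0} ∩ h q0 ⁻¹' s := by
    ext x
    simp only [Set.mem_preimage, Set.mem_iUnion, Set.mem_inter_iff]
    exact ⟨fun hx => ⟨q x, rfl, hx⟩, fun ⟨q0, h1, h2⟩ => by
      have h1 : q x = q0 := h1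
      rwa [h1]⟩
  rw [this]
  exact MeasurableSet.iUnion fun q0 => (hq q0).inter (hm q0 hs)

lemma measurable_wpush_var {X Y A : Type*} [Countable A] [MeasurableSpace X]
    (q : X → A →₀ ℕ) (hq : ∀ q0, MeasurableSet {x | q x = q0}) (f : X → A → Y)
    (y : X → Y) (h : ∀ a, MeasurableSet {x | f x a = y x}) :
    Measurable fun x => wpush (q x) (f x) (y x) := by
  exact measurable_select q hq (fun q0 x => wpush q0 (f x) (y x))
    fun q0 => measurable_wpush q0 f y h

lemma measurable_geoShift {V : Type*} [MeasurableSpace V] (T : SimpleGraph V) :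
    Measurable (geoShift T) := by
  refine Measurable.subtype_mk (measurable_pi_lambda _ fun n => ?_)
  exact (measurable_pi_apply (n + 1)).comp (measurable_subtype_coe (p := fun v => v ∈ Geo T))

lemma wpush_nonneg {A Y : Type*} (q : A →₀ ℕ) (f : A → Y) (y : Y) : 0 ≤ wpush q f y :=
  wavg_nonneg q fun a => by split_ifs <;> norm_num

lemma exists_of_wpush_ne {A Y : Type*} {q : A →₀ ℕ} {f : A → Y} {y : Y}
    (h : wpush q f y ≠ 0) : ∃ a, f a = y := by
  by_contra hcon
  push Not at hcon
  apply h
  simp [wpush, hcon, wavg]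

lemma shift_sum_le {m : ℕ → ℝ} (hm : ∀ k, |m k| ≤ 1) (a n : ℕ) :
    |∑ k ∈ Finset.range n, m k - ∑ k ∈ Finset.range n, m (a + k)| ≤ 2 * a := by
  have h1 := Finset.sum_range_add m a n
  have h2 := Finset.sum_range_add m n a
  rw [add_comm n a] at h2
  have h3 : ∀ f : ℕ → ℕ, |∑ k ∈ Finset.range a, m (f k)| ≤ a := by
    intro f
    refine (Finset.abs_sum_le_sum_abs _ _).trans ((Finset.sum_le_sum fun k _ => hm (f k)).trans ?_)
    simp
  have h4 := abs_le.mp (h3 fun k => k)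
  have h5 := abs_le.mp (h3 fun k => n + k)
  rw [abs_le]
  constructor <;> linarith [h4.1, h4.2, h5.1, h5.2]

lemma pair_sum_le {m m' : ℕ → ℝ} (hm : ∀ k, |m k| ≤ 1) (hm' : ∀ k, |m' k| ≤ 1) (a b n : ℕ)
    {η : ℝ} (h : ∀ t < n, |m (a + t) - m' (b + t)| ≤ η) :
    |∑ k ∈ Finset.range n, m k - ∑ k ∈ Finset.range n, m' k| ≤ 2 * a + 2 * b + n * η := by
  have h1 := abs_le.mp (shift_sum_le hm a n)
  have h2 := abs_le.mp (shift_sum_le hm' b n)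
  have h3 : |∑ k ∈ Finset.range n, m (a + k) - ∑ k ∈ Finset.range n, m' (b + k)| ≤ n * η := by
    rw [← Finset.sum_sub_distrib]
    refine (Finset.abs_sum_le_sum_abs _ _).trans ((Finset.sum_le_sum fun k hk =>
      h k (Finset.mem_range.mp hk)).trans ?_)
    simp
  have h3 := abs_le.mp h3
  rw [abs_le]
  constructor <;> linarith [h1.1, h1.2, h2.1, h2.2, h3.1, h3.2]

lemma abs_eq_mul_sgp (t : ℝ) : |t| = t * sgp (0 ≤ t) := by
  unfold sgp
  split_ifs with h
  · rw [abs_of_nonneg h, mul_one]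
  · rw [abs_of_neg (not_le.mp h)]; ring

set_option maxHeartbeats 1000000 in
theorem borel2Amenable_bdryRel {V : Type*} [Countable V] [MeasurableSpace V]
    [DiscreteMeasurableSpace V] (T : SimpleGraph V) (hT : T.IsTree) (r : V)
    {G : Type*} [Group G] [Countable G] [MulAction G V]
    (hact : IsGraphAction T G)
    (hstab : ∀ v : Geo T, ∃ n : ℕ,
      UniformlyCoamenable ((ptwiseStab G v.1).subgroupOf (initStab G v.1 n))) :
    Borel2Amenable (bdryRel hact) := by
  classical
  obtain ⟨q, hq0, hqm, hqi⟩ := exists_weights hact hstab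
  set W : ℕ → Bdry T → Geo T := fun k x => (geoShift T)^[k] (bdrySec hT r x) with hW
  have hWB : ∀ k x, toBdry (W k x) = x := by
    intro k x
    rw [hW, toBdry_shift, toBdry_bdrySec]
  set F : Geo T → G → Bdry T := fun w g => toBdry (geoSmul hact g w) with hF
  set M : ℕ → Geo T → Set (Bdry T) → ℝ := fun j w D =>
    wavg (q j w) (fun g => sgp (F w g ∈ D)) with hM
  have hM1 : ∀ j w D, |M j w D| ≤ 1 := fun j w D => abs_wavg_le fun g => abs_sgp _
  have hMi : ∀ (w : Geo T) (h : G), ∀ᶠ j : ℕ in atTop, ∀ D : Set (Bdry T),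
      |M j w D - M j (geoSmul hact h w) D| ≤ 1 / ((j : ℝ) + 1) := by
    intro w h
    filter_upwards [hqi w h] with j hj D
    have h1 := hj {v | ∃ hv : v ∈ Geo T, toBdry ⟨v, hv⟩ ∈ D}
    have h2 : ∀ w : Geo T, (w.1 ∈ {v | ∃ hv : v ∈ Geo T, toBdry ⟨v, hv⟩ ∈ D}) =
        (toBdry w ∈ D) := by
      intro w
      exact propext ⟨fun ⟨_, h⟩ => h, fun h => ⟨w.2, h⟩⟩
    simp only [h2] at h1
    exact h1
  set p : ℕ → ℕ → Bdry T → Bdry T → ℝ := fun i j x y =>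
    (∑ k ∈ Finset.range (i + 1), wpush (q j (W k x)) (F (W k x)) y) / ((i : ℝ) + 1) with hp
  have hi0 : ∀ i : ℕ, (0 : ℝ) < (i : ℝ) + 1 := fun i => by positivity
  have hpsum : ∀ i j x (φ : Bdry T → ℝ), HasSum (fun y => p i j x y * φ y)
      ((∑ k ∈ Finset.range (i + 1), wavg (q j (W k x)) (fun g => φ (F (W k x) g))) /
        ((i : ℝ) + 1)) := by
    intro i j x φ
    have h1 := (hasSum_sum (s := Finset.range (i + 1)) fun k _ =>
      hasSum_wpush (q j (W k x)) (F (W k x)) φ).div_const ((i : ℝ) + 1)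
    have h2 : (fun y => p i j x y * φ y) = fun y => (∑ k ∈ Finset.range (i + 1),
        wpush (q j (W k x)) (F (W k x)) y * φ y) / ((i : ℝ) + 1) := by
      funext y
      rw [← Finset.sum_mul, hp, div_mul_eq_mul_div]
    rw [h2]
    exact h1
  have hp1 : ∀ i j x, HasSum (p i j x) 1 := by
    intro i j x
    have h1 := hpsum i j x fun _ => 1
    simp only [mul_one, wavg_one (hq0 _ _), Finset.sum_const, Finset.card_range,
      nsmul_eq_mul] at h1
    have h2 : ((i + 1 : ℕ) : ℝ) / ((i : ℝ) + 1) = 1 := by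
      push_cast; exact div_self (hi0 i).ne'
    rwa [h2] at h1
  refine ⟨p, fun i j x => ⟨fun y => ?_, fun y hy => ?_, hp1 i j x⟩, fun i j => ?_, ?_⟩
  · exact div_nonneg (Finset.sum_nonneg fun k _ => wpush_nonneg _ _ _) (hi0 i).le
  · have h1 : ∑ k ∈ Finset.range (i + 1), wpush (q j (W k x)) (F (W k x)) y ≠ 0 := by
      intro h0
      apply hy
      simp [hp, h0]
    obtain ⟨k, _, hk⟩ := Finset.exists_ne_zero_of_sum_ne_zero h1
    obtain ⟨g, hg⟩ := exists_of_wpush_ne hk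
    refine ⟨g, ?_⟩
    rw [← hg, hF]
    change _ = toBdry (geoSmul hact g (W k x))
    rw [← bdrySmul_toBdry, hWB]
  · -- measurability
    have hWm : ∀ k, Measurable (W k) := by
      intro k
      refine Measurable.comp ?_ (measurable_bdrySec hT r)
      exact (measurable_geoShift T).iterate k
    refine Measurable.div_const (Finset.measurable_sum _ fun k _ => ?_) _
    refine measurable_wpush_var (fun z : Bdry T × Bdry T => q j (W k z.1)) (fun q0 => ?_)
      (fun z => F (W k z.1)) (fun z => z.2) fun g => ?_
    · exact ((hWm k).comp measurable_fst) (hqm j q0)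
    · -- comparison through the section
      have h2 : {z : Bdry T × Bdry T | F (W k z.1) g = z.2} =
          {z : Bdry T × Bdry T | (bdrySec hT r (F (W k z.1) g)).1 = (bdrySec hT r z.2).1} := by
        ext z
        exact ⟨fun h => congrArg (fun y => (bdrySec hT r y).1) h,
          fun h => bdrySec_injective hT r (Subtype.ext h)⟩
      rw [h2]
      refine measurableSet_setOfPred.mpr (measurable_seq_eq ?_ ?_)
      · exact measurable_subtype_coe.comp ((measurable_bdrySec hT r).comp
          (measurable_toBdry.comp ((measurable_geoSmul hact g).comp
            ((hWm k).comp measurable_fst))))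
      · exact measurable_subtype_coe.comp ((measurable_bdrySec hT r).comp measurable_snd)
  · -- asymptotic invariance
    rintro x y ⟨h, hxy⟩ ε hε
    obtain ⟨a, b, hab⟩ : ∃ a b, ∀ t, geoSmul hact h (W (a + t) x) = W (b + t) y := by
      obtain ⟨a, b, hab⟩ := bdrySec_meets hT r (geoSmul hact h (bdrySec hT r x))
      rw [← bdrySmul_toBdry, toBdry_bdrySec, hxy] at hab
      refine ⟨a, b, fun t => ?_⟩
      simp only [hW]
      rw [← iterate_geoShift_geoSmul, add_comm a, add_comm b, Function.iterate_add_apply,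
        Function.iterate_add_apply, hab]
    have hlim : Tendsto (fun i : ℕ => (2 * (a : ℝ) + 2 * b) / ((i : ℝ) + 1)) atTop (nhds 0) :=
      tendsto_const_nhds.div_atTop
        (tendsto_atTop_add_const_right _ _ tendsto_natCast_atTop_atTop)
    filter_upwards [hlim.eventually_lt_const (half_pos hε)] with i hi
    have hev : ∀ᶠ j : ℕ in atTop, ∀ t ∈ Finset.range (i + 1), ∀ D : Set (Bdry T),
        |M j (W (a + t) x) D - M j (W (b + t) y) D| ≤ 1 / ((j : ℝ) + 1) := by
      refine (Finset.eventually_all _).mpr fun t _ => ?_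
      have := hMi (W (a + t) x) h
      rwa [hab t] at this
    filter_upwards [hev,
      tendsto_one_div_add_atTop_nhds_zero_nat.eventually_lt_const (half_pos hε)] with j hj hjε
    set D : Set (Bdry T) := {z | 0 ≤ p i j x z - p i j y z} with hD
    have h1 := (hpsum i j x fun z => sgp (z ∈ D)).sub (hpsum i j y fun z => sgp (z ∈ D))
    have h2 : l1dist (p i j x) (p i j y) =
        (∑ k ∈ Finset.range (i + 1), M j (W k x) D) / ((i : ℝ) + 1) -
        (∑ k ∈ Finset.range (i + 1), M j (W k y) D) / ((i : ℝ) + 1) := by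
      rw [l1dist, ← h1.tsum_eq]
      refine tsum_congr fun z => ?_
      rw [abs_eq_mul_sgp, ← sub_mul]
      rfl
    have h3 := (le_abs_self _).trans (pair_sum_le (fun k => hM1 j (W k x) D)
      (fun k => hM1 j (W k y) D) a b (i + 1) (η := 1 / ((j : ℝ) + 1))
      fun t ht => hj t (Finset.mem_range.mpr ht) D)
    rw [h2, ← sub_div]
    calc _ ≤ (2 * (a : ℝ) + 2 * b + ((i + 1 : ℕ) : ℝ) * (1 / ((j : ℝ) + 1))) / ((i : ℝ) + 1) :=
          div_le_div_of_nonneg_right h3 (hi0 i).le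
      _ = (2 * (a : ℝ) + 2 * b) / ((i : ℝ) + 1) + 1 / ((j : ℝ) + 1) := by
          push_cast
          rw [add_div, mul_div_cancel_left₀ _ (hi0 i).ne']
      _ < ε := by linarith

end Assembly

theorem boundary_action_two_amenable_of_uniformly_coamenable_initial_segments
    {V : Type*} [Countable V] [MeasurableSpace V] [DiscreteMeasurableSpace V]
    (T : SimpleGraph V) (hT : T.IsTree)
    {G : Type*} [Group G] [Countable G] [MulAction G V]
    (hact : IsGraphAction T G)
    (hstab : ∀ v : Geo T, ∃ n : ℕ,
      UniformlyCoamenable ((ptwiseStab G v.1).subgroupOf (initStab G v.1 n))) :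
    Borel2Amenable (bdryRel hact) ∧ MeasureHyperfinite (bdryRel hact) := by
  obtain ⟨r⟩ : Nonempty V := hT.connected.nonempty
  have h2 := borel2Amenable_bdryRel T hT r hact hstab
  refine ⟨h2, ?_⟩
  let _ : MulAction G (Bdry T) :=
    { smul := fun g x => bdrySmul hact g x
      one_smul := by
        intro x
        change bdrySmul hact 1 x = x
        rw [← toBdry_bdrySec hT r x, bdrySmul_toBdry, geoSmul_one]
      mul_smul := by
        intro a b x
        change bdrySmul hact (a * b) x = bdrySmul hact a (bdrySmul hact b x)
        rw [← toBdry_bdrySec hT r x, bdrySmul_toBdry, bdrySmul_toBdry, bdrySmul_toBdry,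
          geoSmul_mul] }
  have : Nonempty (ℕ × V) := ⟨(0, r)⟩
  obtain ⟨e, he⟩ := exists_surjective_nat (ℕ × V)
  refine measureHyperfinite_of_borel2Amenable (G := G) (measurable_bdrySmul hact)
    (fun i => {x | (bdrySec hT r x).1 (e i).1 = (e i).2}) ?_ ?_ (bdryRel hact)
    (fun x y => Iff.rfl) h2
  · intro i
    have h1 : Measurable fun x => (bdrySec hT r x).1 (e i).1 :=
      (measurable_pi_apply _).comp (measurable_subtype_coe.comp (measurable_bdrySec hT r))
    exact h1 (measurableSet_singleton _)
  · intro x y hxy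
    by_contra hcon
    push Not at hcon
    apply hxy
    apply bdrySec_injective hT r
    apply Subtype.ext
    funext k
    obtain ⟨i, hi⟩ := he (k, (bdrySec hT r x).1 k)
    have := hcon i
    simp only [Set.mem_ofPred_eq, hi] at this
    exact (this.mp trivial).symm
end

section
/- Let M and N be countable monoids, and let M × N act on a standard Borel space X by a countable-to-one Borel action such that the orbit equivalence relation E_N^X of the N-action is smooth. Then E_{M×N}^X is Borel bireducible with the orbit equivalence relation E_M^{X/N} of the induced action of M on the quotient space X/N. -/
open MeasureTheory Function Filter

/-! ### STATEMENT 2 -/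

section Stmt2

variable (M N : Type*) {X : Type*} [Monoid M] [Monoid N] [MulAction (M × N) X]

/-- The orbit equivalence relation of the `N`-part of the action of `M × N`. -/
def nPartRel : X → X → Prop :=
  Relation.EqvGen fun x y => ∃ n : N, y = ((1 : M), n) • x

def nPartSetoid : Setoid X :=
  ⟨nPartRel M N, Relation.EqvGen.is_equivalence _⟩

/-- The quotient space `X/N`. -/
abbrev QuotByN (M N X : Type*) [Monoid M] [Monoid N] [MulAction (M × N) X] : Type _ :=
  Quotient (nPartSetoid M N (X := X))

lemma nPartRel_smul (m : M) {x y : X} (h : nPartRel M N x y) :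
    nPartRel M N (((m, (1 : N)) : M × N) • x) (((m, (1 : N)) : M × N) • y) := by
  induction h with
  | rel a b hab =>
      obtain ⟨n, rfl⟩ := hab
      refine Relation.EqvGen.rel _ _ ⟨n, ?_⟩
      rw [smul_smul, smul_smul, Prod.mk_mul_mk, Prod.mk_mul_mk, one_mul, mul_one,
        one_mul, mul_one]
  | refl a => exact Relation.EqvGen.refl _
  | symm a b _ ih => exact Relation.EqvGen.symm _ _ ih
  | trans a b c _ _ ih1 ih2 => exact Relation.EqvGen.trans _ _ _ ih1 ih2

/-- The induced action of `m : M` on the quotient `X/N`. -/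
def mSmulQuot (m : M) : QuotByN M N X → QuotByN M N X :=
  Quotient.map (fun x => ((m, (1 : N)) : M × N) • x) (fun _ _ h => nPartRel_smul M N m h)

/-- The orbit equivalence relation `E_M^{X/N}` of the induced action of `M` on `X/N`. -/
def mQuotRel : QuotByN M N X → QuotByN M N X → Prop :=
  Relation.EqvGen fun a b => ∃ m : M, b = mSmulQuot M N m a

end Stmt2

lemma eqvGen_chain {X : Type*} {r : X → X → Prop} {x y : X} (h : Relation.EqvGen r x y) :
    ∃ (k : ℕ) (p : ℕ → X), p 0 = x ∧ p k = y ∧ ∀ i < k, r (p i) (p (i+1)) ∨ r (p (i+1)) (p i) := by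
  have hsym : Std.Symm (Relation.ReflTransGen (fun a b => r a b ∨ r b a)) := by
    have : Std.Symm (fun a b => r a b ∨ r b a) := ⟨fun _ _ h => h.symm⟩
    infer_instance
  have h' : Relation.ReflTransGen (fun a b => r a b ∨ r b a) x y := by
    induction h with
    | rel a b hab => exact Relation.ReflTransGen.single (Or.inl hab)
    | refl a => exact Relation.ReflTransGen.refl
    | symm a b _ ih => exact hsym.symm _ _ ih
    | trans a b c _ _ ih1 ih2 => exact ih1.trans ih2
  clear h
  induction h' using Relation.ReflTransGen.head_induction_on with
  | refl => exact ⟨0, fun _ => y, rfl, rfl, by simp⟩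
  | head hab _ ih =>
    rename_i a b _
    obtain ⟨k, p, h0, hk, hp⟩ := ih
    refine ⟨k + 1, fun i => Nat.casesOn i a p, rfl, hk, ?_⟩
    intro i hi
    cases i with
    | zero => simpa [h0] using hab
    | succ i => exact hp i (by omega)

lemma chain_eqvGen {X : Type*} {r : X → X → Prop} (k : ℕ) (p : ℕ → X)
    (h : ∀ i < k, r (p i) (p (i+1)) ∨ r (p (i+1)) (p i)) : Relation.EqvGen r (p 0) (p k) := by
  induction k with
  | zero => exact Relation.EqvGen.refl _
  | succ k ih =>
    refine Relation.EqvGen.trans _ _ _ (ih fun i hi => h i (by omega)) ?_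
    rcases h k (by omega) with h | h
    · exact Relation.EqvGen.rel _ _ h
    · exact Relation.EqvGen.symm _ _ (Relation.EqvGen.rel _ _ h)

lemma analytic_saturation {X : Type*} [TopologicalSpace X] [PolishSpace X] [MeasurableSpace X]
    [BorelSpace X] {r : X → X → Prop} (hr : MeasurableSet {q : X × X | r q.1 q.2})
    {A : Set X} (hA : MeasurableSet A) :
    AnalyticSet {x | ∃ a ∈ A, Relation.EqvGen r x a} := by
  have key : {x | ∃ a ∈ A, Relation.EqvGen r x a} = ⋃ k : ℕ, (fun p : ℕ → X => p 0) ''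
      {p | p k ∈ A ∧ ∀ i < k, r (p i) (p (i+1)) ∨ r (p (i+1)) (p i)} := by
    ext x
    simp only [Set.mem_ofPred_eq, Set.mem_iUnion, Set.mem_image]
    constructor
    · rintro ⟨a, ha, h⟩
      obtain ⟨k, p, h0, hk, hp⟩ := eqvGen_chain h
      exact ⟨k, p, ⟨hk ▸ ha, hp⟩, h0⟩
    · rintro ⟨k, p, ⟨hk, hp⟩, rfl⟩
      exact ⟨p k, hk, chain_eqvGen k p hp⟩
  rw [key]
  refine AnalyticSet.iUnion fun k => MeasurableSet.analyticSet_image ?_ (measurable_pi_apply 0)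
  have hm : ∀ i j : ℕ, MeasurableSet {p : ℕ → X | r (p i) (p j)} := fun i j =>
    measurableSet_preimage (f := fun p : ℕ → X => (p i, p j))
      ((measurable_pi_apply i).prodMk (measurable_pi_apply j)) hr
  refine MeasurableSet.inter (hA.preimage (measurable_pi_apply k)) ?_
  have : {p : ℕ → X | ∀ i < k, r (p i) (p (i+1)) ∨ r (p (i+1)) (p i)} =
      ⋂ i, ⋂ (_ : i < k), ({p | r (p i) (p (i+1))} ∪ {p | r (p (i+1)) (p i)}) := by
    ext p; simp
  change MeasurableSet {p : ℕ → X | ∀ i < k, r (p i) (p (i+1)) ∨ r (p (i+1)) (p i)}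
  rw [this]
  exact MeasurableSet.iInter fun i => MeasurableSet.iInter fun _ => (hm _ _).union (hm _ _)

lemma measurable_selector {X : Type*} [MeasurableSpace X] [StandardBorelSpace X]
    {r : X → X → Prop} (hr : MeasurableSet {q : X × X | r q.1 q.2})
    {B : Set X} (hB : MeasurableSet B) (hT : IsTransversal (Relation.EqvGen r) B)
    (s : X → X) (hs : ∀ x, s x ∈ B ∧ Relation.EqvGen r x (s x)) : Measurable s := by
  let := upgradeStandardBorel X
  have key : ∀ A : Set X, s ⁻¹' A = {x | ∃ a ∈ A ∩ B, Relation.EqvGen r x a} := by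
    intro A
    ext x
    constructor
    · intro h
      exact ⟨s x, ⟨h, (hs x).1⟩, (hs x).2⟩
    · rintro ⟨a, ⟨ha, haB⟩, h⟩
      have : s x = a := (hT x).unique (hs x) ⟨haB, h⟩
      exact (this ▸ ha : s x ∈ A)
  intro A hA
  apply AnalyticSet.measurableSet_of_compl
  · rw [key]; exact analytic_saturation hr (hA.inter hB)
  · rw [← Set.preimage_compl, key]; exact analytic_saturation hr (hA.compl.inter hB)

section

variable {M N X : Type*} [Monoid M] [Monoid N] [MulAction (M × N) X]

lemma nPart_le {x y : X} (h : nPartRel M N x y) : monOrbitRel (M × N) x y := by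
  refine Relation.EqvGen.mono ?_ _ _ h
  rintro a b ⟨n, rfl⟩
  exact ⟨(1, n), rfl⟩

lemma monOrbit_iff (x y : X) : monOrbitRel (M × N) x y ↔
    mQuotRel M N (Quotient.mk (nPartSetoid M N) x) (Quotient.mk (nPartSetoid M N) y) := by
  constructor
  · intro h
    induction h with
    | rel a b hab =>
      obtain ⟨⟨m, n⟩, rfl⟩ := hab
      refine Relation.EqvGen.rel _ _ ⟨m, ?_⟩
      apply Quotient.sound
      refine Relation.EqvGen.symm _ _ (Relation.EqvGen.rel _ _ ⟨n, ?_⟩)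
      rw [smul_smul, Prod.mk_mul_mk, one_mul, mul_one]
    | refl a => exact Relation.EqvGen.refl _
    | symm a b _ ih => exact Relation.EqvGen.symm _ _ ih
    | trans a b c _ _ ih1 ih2 => exact Relation.EqvGen.trans _ _ _ ih1 ih2
  · have main : ∀ a b : QuotByN M N X, mQuotRel M N a b → ∀ x y : X,
        Quotient.mk (nPartSetoid M N) x = a → Quotient.mk (nPartSetoid M N) y = b →
        monOrbitRel (M × N) x y := by
      intro a b h
      induction h with
      | rel a b hab =>
        rintro x y rfl rfl
        obtain ⟨m, hm⟩ := hab
        have h1 : nPartRel M N y (((m, (1 : N)) : M × N) • x) := Quotient.exact hm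
        exact Relation.EqvGen.trans _ _ _ (Relation.EqvGen.rel _ _ ⟨(m, 1), rfl⟩)
          (Relation.EqvGen.symm _ _ (nPart_le h1))
      | refl a =>
        rintro x y rfl h
        exact Relation.EqvGen.symm _ _ (nPart_le (Quotient.exact h))
      | symm a b _ ih => exact fun x y hx hy => Relation.EqvGen.symm _ _ (ih y x hy hx)
      | trans a b c _ _ ih1 ih2 =>
        intro x y hx hy
        obtain ⟨z, hz⟩ := Quotient.exists_rep b
        exact Relation.EqvGen.trans _ _ _ (ih1 x z hx hz) (ih2 z y hz hy)
    exact fun h => main _ _ h x y rfl rfl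

end

theorem orbit_rel_bireducible_with_quotient
    {M N X : Type*} [Monoid M] [Monoid N] [Countable M] [Countable N]
    [MeasurableSpace X] [StandardBorelSpace X] [MulAction (M × N) X]
    (hBorel : ∀ p : M × N, Measurable fun x : X => p • x)
    (hcto : ∀ (p : M × N) (x : X), {y : X | p • y = x}.Countable)
    (hsmooth : SmoothRel (nPartRel M N (X := X))) :
    BorelBireducible (monOrbitRel (M × N) (X := X)) (mQuotRel M N (X := X)) := by
  refine ⟨⟨Quotient.mk (nPartSetoid M N), measurable_quotient_mk'', monOrbit_iff⟩, ?_⟩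
  obtain ⟨B, hB, hT⟩ := hsmooth
  choose s hs hu using hT
  have hr : MeasurableSet {q : X × X | ∃ n : N, q.2 = ((1 : M), n) • q.1} := by
    let := upgradeStandardBorel X
    have : {q : X × X | ∃ n : N, q.2 = ((1 : M), n) • q.1} =
        ⋃ n : N, {q : X × X | q.2 = ((1 : M), n) • q.1} := by ext; simp
    rw [this]
    exact MeasurableSet.iUnion fun n =>
      measurableSet_eq_fun measurable_snd ((hBorel (1, n)).comp measurable_fst)
  have hsm : Measurable s :=
    measurable_selector (r := fun x y => ∃ n : N, y = ((1 : M), n) • x) hr hB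
      (fun x => ⟨s x, hs x, hu x⟩) s hs
  have hinv : ∀ x y : X, nPartRel M N x y → s x = s y := fun x y h =>
    (hu x (s y) ⟨(hs y).1, Relation.EqvGen.trans _ _ _ h (hs y).2⟩).symm
  refine ⟨Quotient.lift (s := nPartSetoid M N) s hinv, ?_, ?_⟩
  · exact measurable_from_quotient.2 hsm
  · intro a b
    induction a using Quotient.inductionOn with | _ x
    induction b using Quotient.inductionOn with | _ y
    change _ ↔ monOrbitRel (M × N) (s x) (s y)
    rw [monOrbit_iff]
    rw [← Quotient.sound (s := nPartSetoid M N) (hs x).2,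
      ← Quotient.sound (s := nPartSetoid M N) (hs y).2]
end
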